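/- arXiv:1809.09165 — 8 statements merged into one kernel-verified Lean document; each statement's English description precedes it below -/
import Mathlib

section
/- Let X be a finite set and C a class of functions f: X → {−1,1} that is closed under negation (f ∈ C implies −f ∈ C). Let m ≥ 1 be an integer, let R be a probability measure on a finite seed set Ω, and suppose that for each seed r ∈ Ω there are functions h₁ʳ,…,h_mʳ : X → [−1,1], and for each seed r ∈ Ω, each f ∈ C, and each probability distribution D on X there is a hypothesis h^r_{f,D} : X → {−1,1}, satisfying the following invariance property: for every r, f ∈ C, and D, if |E_{x∼D}[f(x)·hᵢʳ(x)]| < 1/m for all i ∈ {1,…,m}, then h^r_{f,D} = h^r_{−f,D}. If for every f ∈ C and every probability distribution D on X it holds that Pr_{r∼R}[ Pr_{x∼D}[ h^r_{f,D}(x) ≠ f(x) ] < 1/2 ] ≥ 2/3, then for every f ∈ C and every D, Pr_{r∼R}[ ∃ i ∈ {1,…,m} : |E_{x∼D}[f(x)·hᵢʳ(x)]| ≥ 1/m ] ≥ 1/3, and consequently mc(C) ≤ 6·m^{3/2}. -/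
/-!
If, for a seed `r`, no query `h r i` has correlation at least `1/m` with `f` under `D`, then the
hypotheses for `f` and for `-f` coincide, and their errors add up to `1`; hence they cannot both
be less than `1/2`.  Each of the two succeeds with probability at least `2/3`, so both succeed with
probability at least `1/3`, which gives the correlation bound (`correlation_bound`).

For the margin, embed `x` as the vector with coordinates `√(ρ r / m) * h r i x`, indexed by
`(r, i)`.  By the correlation bound, the `D`-average of `f x • Ψ x` has squared norm at least
`(1/3) * (1/m) * (1/m²)` for every distribution `D`, i.e. the convex hull of the vectors
`f x • Ψ x` stays at distance at least `1 / (√3 * m^(3/2))` from the origin.  The normalized point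
of least norm of that hull separates with this margin (`exists_separator`), and `√3 ≤ 6`.
-/

open Finset RealInnerProductSpace
open scoped BigOperators Classical

/-- `C` has margin at least `γ`: there is an embedding of `X` into the unit ball of some
Euclidean space such that every `f ∈ C` is linearly separable with margin `γ`. -/
def HasMarginAtLeast {X : Type*} (C : Set (X → ℝ)) (γ : ℝ) : Prop :=
  ∃ (N : ℕ) (Ψ : X → EuclideanSpace ℝ (Fin N)),
    (∀ x, ‖Ψ x‖ ≤ 1) ∧
    ∀ f ∈ C, ∃ w : EuclideanSpace ℝ (Fin N), ‖w‖ ≤ 1 ∧ ∀ x, γ ≤ f x * ⟪w, Ψ x⟫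

/-- `mc(C) ≤ M`: for every `M' > M`, `C` has margin at least `1/M'` in some dimension. -/
def MarginComplexityLE {X : Type*} (C : Set (X → ℝ)) (M : ℝ) : Prop :=
  ∀ M' : ℝ, M < M' → HasMarginAtLeast C (1 / M')

/-- Duality between margin and distance: if every convex combination of the vectors `a x` has norm
at least `δ > 0`, some vector of the unit ball has inner product at least `δ` with every `a x`. It is
the normalized point of least norm of the convex hull. -/
theorem exists_separator {X E : Type*} [Fintype X] [NormedAddCommGroup E] [InnerProductSpace ℝ E]
    (a : X → E) (δ : ℝ) (hδ : 0 < δ)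
    (ha : ∀ D : X → ℝ, (∀ x, 0 ≤ D x) → ∑ x, D x = 1 → δ ≤ ‖∑ x, D x • a x‖) :
    ∃ w : E, ‖w‖ ≤ 1 ∧ ∀ x, δ ≤ ⟪w, a x⟫ := by
  rcases isEmpty_or_nonempty X with hX | ⟨⟨x₀⟩⟩
  · exact ⟨0, by simp, fun x => hX.elim x⟩
  set L : (X → ℝ) →ₗ[ℝ] E := Fintype.linearCombination ℝ a with hL
  have hLapp : ∀ D, L D = ∑ x, D x • a x := fun D => by
    simp [hL, Fintype.linearCombination_apply]
  have hLc : Continuous L := by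
    have : (L : (X → ℝ) → E) = fun D => ∑ x, D x • a x := funext hLapp
    rw [this]; fun_prop
  set K : Set E := L '' stdSimplex ℝ X with hK
  have hKc : IsComplete K := ((isCompact_stdSimplex ℝ X).image hLc).isComplete
  have hKconv : Convex ℝ K := (convex_stdSimplex ℝ X).linear_image L
  have hmem : ∀ x, a x ∈ K := fun x =>
    ⟨Pi.single x 1, single_mem_stdSimplex ℝ x, by simp [hL]⟩
  obtain ⟨v, hvK, hv⟩ := exists_norm_eq_iInf_of_complete_convex ⟨_, hmem x₀⟩ hKc hKconv 0
  have hmin := (norm_eq_iInf_iff_real_inner_le_zero hKconv hvK).1 hv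
  have hvδ : δ ≤ ‖v‖ := by
    obtain ⟨D, hD, rfl⟩ := hvK
    rw [hLapp]
    exact ha D hD.1 hD.2
  have hv0 : 0 < ‖v‖ := hδ.trans_le hvδ
  refine ⟨‖v‖⁻¹ • v, ?_, fun x => ?_⟩
  · rw [norm_smul, norm_inv, norm_norm, inv_mul_cancel₀ hv0.ne']
  · have h1 := hmin _ (hmem x)
    rw [zero_sub, inner_neg_left, inner_sub_right, real_inner_self_eq_norm_sq] at h1
    rw [real_inner_smul_left]
    calc δ ≤ ‖v‖ := hvδ
      _ = ‖v‖⁻¹ * ‖v‖ ^ 2 := by field_simp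
      _ ≤ _ := by gcongr; linarith

/-- A realization in any finite-dimensional Euclidean space can be moved to `Fin N` coordinates. -/
theorem hasMarginAtLeast_of_euclidean {X ι : Type*} [Fintype ι] (C : Set (X → ℝ)) (γ : ℝ)
    (Ψ : X → EuclideanSpace ℝ ι) (hΨ : ∀ x, ‖Ψ x‖ ≤ 1)
    (hw : ∀ f ∈ C, ∃ w : EuclideanSpace ℝ ι, ‖w‖ ≤ 1 ∧ ∀ x, γ ≤ f x * ⟪w, Ψ x⟫) :
    HasMarginAtLeast C γ := by
  let e := LinearIsometryEquiv.piLpCongrLeft 2 ℝ ℝ (Fintype.equivFin ι)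
  refine ⟨Fintype.card ι, fun x => e (Ψ x), fun x => by simpa using hΨ x, fun f hf => ?_⟩
  obtain ⟨w, hw1, hw2⟩ := hw f hf
  refine ⟨e w, by simpa using hw1, fun x => ?_⟩
  rw [e.inner_map_map]
  exact hw2 x

/-- With probability at least `1/3` over the seed, some query has correlation at least `1/m` with
`f`. Here `g₁ r` and `g₂ r` are the hypotheses output for `f` and for `-f` under the fixed
distribution `D`. -/
theorem correlation_bound {X Ω : Type*} [Fintype X] [Fintype Ω] (m : ℕ)
    (ρ : Ω → ℝ) (hρ0 : ∀ r, 0 ≤ ρ r) (hρ1 : ∑ r, ρ r = 1)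
    (h : Ω → Fin m → X → ℝ) (g₁ g₂ : Ω → X → ℝ)
    (hg : ∀ r x, g₁ r x = 1 ∨ g₁ r x = -1)
    (f : X → ℝ) (hf : ∀ x, f x = 1 ∨ f x = -1) (D : X → ℝ) (hD1 : ∑ x, D x = 1)
    (hinv : ∀ r, (∀ i : Fin m, |∑ x, D x * (f x * h r i x)| < 1 / m) → g₁ r = g₂ r)
    (hs₁ : (2 : ℝ) / 3 ≤ ∑ r ∈ univ.filter (fun r =>
        ∑ x ∈ univ.filter (fun x => g₁ r x ≠ f x), D x < 1 / 2), ρ r)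
    (hs₂ : (2 : ℝ) / 3 ≤ ∑ r ∈ univ.filter (fun r =>
        ∑ x ∈ univ.filter (fun x => g₂ r x ≠ -f x), D x < 1 / 2), ρ r) :
    (1 : ℝ) / 3 ≤ ∑ r ∈ univ.filter (fun r =>
        ∃ i : Fin m, (1 : ℝ) / m ≤ |∑ x, D x * (f x * h r i x)|), ρ r := by
  set A := univ.filter (fun r => ∑ x ∈ univ.filter (fun x => g₁ r x ≠ f x), D x < 1 / 2)
  set B := univ.filter (fun r => ∑ x ∈ univ.filter (fun x => g₂ r x ≠ -f x), D x < 1 / 2)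
  have hsub : A ∩ B ⊆ univ.filter (fun r =>
      ∃ i : Fin m, (1 : ℝ) / m ≤ |∑ x, D x * (f x * h r i x)|) := by
    intro r hr
    obtain ⟨hA, hB⟩ := mem_inter.1 hr
    have hA := (mem_filter.1 hA).2
    have hB := (mem_filter.1 hB).2
    rw [mem_filter]
    refine ⟨mem_univ _, ?_⟩
    by_contra! hcon
    rw [← hinv r hcon] at hB
    -- a sign differing from `-f x` is exactly a sign equal to `f x`
    have hfilter : univ.filter (fun x => g₁ r x ≠ -f x) =
        univ.filter (fun x => ¬ (g₁ r x ≠ f x)) := by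
      refine filter_congr fun x _ => ?_
      rcases hg r x with h1 | h1 <;> rcases hf x with h2 | h2 <;> rw [h1, h2] <;> norm_num
    rw [hfilter] at hB
    have := sum_filter_add_sum_filter_not univ (fun x => g₁ r x ≠ f x) D
    linarith
  have hunion : ∑ r ∈ A ∪ B, ρ r ≤ 1 :=
    hρ1 ▸ sum_le_sum_of_subset_of_nonneg (subset_univ _) fun r _ _ => hρ0 r
  have hincl := sum_union_inter (s₁ := A) (s₂ := B) (f := ρ)
  have hle := sum_le_sum_of_subset_of_nonneg hsub fun r _ _ => hρ0 r
  linarith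

theorem stmt0 {X Ω : Type*} [Fintype X] [Fintype Ω]
    (C : Set (X → ℝ))
    (hCval : ∀ f ∈ C, ∀ x, f x = 1 ∨ f x = -1)
    (hCneg : ∀ f ∈ C, (fun x => -f x) ∈ C)
    (m : ℕ) (hm : 1 ≤ m)
    (ρ : Ω → ℝ) (hρ0 : ∀ r, 0 ≤ ρ r) (hρ1 : ∑ r, ρ r = 1)
    (h : Ω → Fin m → X → ℝ)
    (hhb : ∀ r i x, |h r i x| ≤ 1)
    (hyp : Ω → (X → ℝ) → (X → ℝ) → X → ℝ)
    (hhypval : ∀ r f D x, hyp r f D x = 1 ∨ hyp r f D x = -1)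
    (hinv : ∀ r, ∀ f ∈ C, ∀ D : X → ℝ, (∀ x, 0 ≤ D x) → ∑ x, D x = 1 →
      (∀ i : Fin m, |∑ x, D x * (f x * h r i x)| < 1 / m) →
      hyp r f D = hyp r (fun x => -f x) D)
    (hsucc : ∀ f ∈ C, ∀ D : X → ℝ, (∀ x, 0 ≤ D x) → ∑ x, D x = 1 →
      (2 : ℝ) / 3 ≤ ∑ r ∈ univ.filter (fun r =>
        ∑ x ∈ univ.filter (fun x => hyp r f D x ≠ f x), D x < 1 / 2), ρ r) :
    (∀ f ∈ C, ∀ D : X → ℝ, (∀ x, 0 ≤ D x) → ∑ x, D x = 1 →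
      (1 : ℝ) / 3 ≤ ∑ r ∈ univ.filter (fun r =>
        ∃ i : Fin m, (1 : ℝ) / m ≤ |∑ x, D x * (f x * h r i x)|), ρ r) ∧
    MarginComplexityLE C (6 * (m : ℝ) ^ (3 / 2 : ℝ)) := by
  have key : ∀ f ∈ C, ∀ D : X → ℝ, (∀ x, 0 ≤ D x) → ∑ x, D x = 1 →
      (1 : ℝ) / 3 ≤ ∑ r ∈ univ.filter (fun r =>
        ∃ i : Fin m, (1 : ℝ) / m ≤ |∑ x, D x * (f x * h r i x)|), ρ r :=
    fun f hf D hD0 hD1 => correlation_bound m ρ hρ0 hρ1 h (fun r => hyp r f D)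
      (fun r => hyp r (fun x => -f x) D) (fun r => hhypval r f D) f (hCval f hf) D hD1
      (fun r => hinv r f hf D hD0 hD1) (hsucc f hf D hD0 hD1)
      (hsucc _ (hCneg f hf) D hD0 hD1)
  refine ⟨key, fun M' hM' => ?_⟩
  have hmpos : (0 : ℝ) < m := by exact_mod_cast hm
  have hpow : ((m : ℝ) ^ (3 / 2 : ℝ)) ^ 2 = (m : ℝ) ^ 3 := by
    rw [← Real.rpow_natCast, ← Real.rpow_mul hmpos.le, ← Real.rpow_natCast]
    norm_num
  have hM0 : 0 < M' := lt_trans (by positivity) hM'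
  have hM2 : 36 * (m : ℝ) ^ 3 ≤ M' ^ 2 := by
    rw [← hpow]
    calc 36 * ((m : ℝ) ^ (3 / 2 : ℝ)) ^ 2 = (6 * (m : ℝ) ^ (3 / 2 : ℝ)) ^ 2 := by ring
      _ ≤ M' ^ 2 := by gcongr
  let Ψ : X → EuclideanSpace ℝ (Ω × Fin m) := fun x =>
    WithLp.toLp 2 fun p => √(ρ p.1 / m) * h p.1 p.2 x
  have hsq : ∀ r, √(ρ r / m) ^ 2 = ρ r / m := fun r =>
    Real.sq_sqrt (div_nonneg (hρ0 r) hmpos.le)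
  refine hasMarginAtLeast_of_euclidean C _ Ψ (fun x => ?_) fun f hf => ?_
  · rw [← abs_of_nonneg (norm_nonneg (Ψ x)), ← sq_le_one_iff_abs_le_one,
      EuclideanSpace.real_norm_sq_eq]
    calc ∑ p : Ω × Fin m, (Ψ x p) ^ 2
        ≤ ∑ p : Ω × Fin m, ρ p.1 / m := by
          refine sum_le_sum fun p _ => ?_
          have h1 : h p.1 p.2 x ^ 2 ≤ 1 := (sq_le_one_iff_abs_le_one _).2 (hhb _ _ _)
          simp only [Ψ, mul_pow, hsq]
          exact mul_le_of_le_one_right (div_nonneg (hρ0 _) hmpos.le) h1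
      _ = 1 := by
          rw [Fintype.sum_prod_type]
          simp only [sum_const, card_univ, Fintype.card_fin, nsmul_eq_mul]
          rw [← hρ1]
          exact sum_congr rfl fun r _ => by field_simp
  · suffices hdist : ∀ D : X → ℝ, (∀ x, 0 ≤ D x) → ∑ x, D x = 1 →
        1 / M' ≤ ‖∑ x, D x • f x • Ψ x‖ by
      obtain ⟨w, hw1, hw2⟩ := exists_separator (fun x => f x • Ψ x) (1 / M') (by positivity) hdist
      exact ⟨w, hw1, fun x => by simpa only [real_inner_smul_right] using hw2 x⟩
    intro D hD0 hD1
    have hcoord : ∀ p : Ω × Fin m, (∑ x, D x • f x • Ψ x) p =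
        √(ρ p.1 / m) * ∑ x, D x * (f x * h p.1 p.2 x) := fun p => by
      simp only [WithLp.ofLp_sum, Finset.sum_apply, WithLp.ofLp_smul, Pi.smul_apply, smul_eq_mul,
        mul_sum, Ψ]
      exact sum_congr rfl fun x _ => by ring
    refine le_of_sq_le_sq ?_ (norm_nonneg _)
    rw [EuclideanSpace.real_norm_sq_eq]
    simp only [hcoord, mul_pow, hsq]
    rw [Fintype.sum_prod_type]
    calc (1 / M') ^ 2 ≤ 1 / (m : ℝ) ^ 3 * (1 / 3) := by
          rw [div_pow, one_pow, div_mul_div_comm, one_mul]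
          apply one_div_le_one_div_of_le (by positivity)
          nlinarith [pow_pos hmpos 3]
      _ ≤ 1 / (m : ℝ) ^ 3 * ∑ r ∈ univ.filter (fun r =>
            ∃ i : Fin m, (1 : ℝ) / m ≤ |∑ x, D x * (f x * h r i x)|), ρ r := by
          gcongr
          exact key f hf D hD0 hD1
      _ = ∑ r ∈ univ.filter (fun r =>
            ∃ i : Fin m, (1 : ℝ) / m ≤ |∑ x, D x * (f x * h r i x)|), ρ r / m * (1 / m) ^ 2 := by
          rw [mul_sum]
          exact sum_congr rfl fun r _ => by field_simp
      _ ≤ ∑ r ∈ univ.filter (fun r =>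
            ∃ i : Fin m, (1 : ℝ) / m ≤ |∑ x, D x * (f x * h r i x)|),
            ∑ i, ρ r / m * (∑ x, D x * (f x * h r i x)) ^ 2 := by
          refine sum_le_sum fun r hr => ?_
          obtain ⟨i, hi⟩ := (mem_filter.1 hr).2
          have hρm : 0 ≤ ρ r / m := div_nonneg (hρ0 r) hmpos.le
          refine le_trans ?_ (single_le_sum
            (f := fun i => ρ r / m * (∑ x, D x * (f x * h r i x)) ^ 2)
            (fun j _ => mul_nonneg hρm (sq_nonneg _)) (mem_univ i))
          refine mul_le_mul_of_nonneg_left ?_ hρm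
          rw [← sq_abs (∑ x, D x * (f x * h r i x))]
          gcongr
      _ ≤ _ := sum_le_sum_of_subset_of_nonneg (filter_subset _ _) fun r _ _ =>
          sum_nonneg fun i _ => mul_nonneg (div_nonneg (hρ0 r) hmpos.le) (sq_nonneg _)
end

section
/- Let X be a finite set and C a class of functions f: X → {−1,1}. Let m ≥ 1 be an integer and β > 0. Suppose μ is a probability measure on a finite set of m-tuples (h₁,…,h_m) of functions X → [−1,1] such that for every f ∈ C and every probability distribution D on X, with μ-probability at least β there exists i ∈ {1,…,m} with |E_{x∼D}[f(x)·hᵢ(x)]| ≥ 1/m. Then mc(C) ≤ (2/β)·m^{3/2}. -/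
/-!
The feature map sends `x` to the vector with coordinates `√(μ t / m) * H t i x`, indexed by the
pairs `(t, i)`; it lands in the unit ball because `|H t i x| ≤ 1` and `∑ t, μ t = 1`.

Fix `f ∈ C`. For a distribution `D` on `X`, the squared norm of `v_D = ∑ x, D x • (f x • Ψ x)` is
`∑ t, ∑ i, (μ t / m) * E_D[f * H t i] ^ 2`. With `μ`-probability at least `β` some `i` has
`E_D[f * H t i] ^ 2 ≥ 1 / m ^ 2`, so `‖v_D‖ ^ 2 ≥ β / m ^ 3`. The vectors `v_D` form a compact convex set, and
its point of least norm, normalized, is a separating direction with margin at least the distance of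
that set from the origin (`exists_separating_of_norm_ge`). The margin obtained is `√β / m ^ (3/2)`,
and `√β ≥ β / 2` because `β ≤ 1` as soon as `C` and `X` are nonempty.
-/

open Finset RealInnerProductSpace
open scoped BigOperators Classical

/-- If every convex combination of the finite family `p` has norm at least `c > 0`, then the
normalized point of least norm in the convex hull of `p` separates the family from the origin
with margin `c`. -/
lemma exists_separating_of_norm_ge {X E : Type*} [Fintype X] [Nonempty X]
    [NormedAddCommGroup E] [InnerProductSpace ℝ E] (p : X → E) {c : ℝ} (hc : 0 < c)
    (h : ∀ D : X → ℝ, (∀ x, 0 ≤ D x) → ∑ x, D x = 1 → c ≤ ‖∑ x, D x • p x‖) :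
    ∃ w : E, ‖w‖ ≤ 1 ∧ ∀ x, c ≤ ⟪w, p x⟫ := by
  let L : (X → ℝ) →ₗ[ℝ] E := Fintype.linearCombination ℝ p
  have hL : ∀ D, L D = ∑ x, D x • p x := fun D => Fintype.linearCombination_apply ℝ p D
  have hLc : Continuous L := by
    have : (L : (X → ℝ) → E) = fun D => ∑ x, D x • p x := funext hL
    rw [this]; fun_prop
  have hmem : ∀ x, p x ∈ L '' stdSimplex ℝ X := fun x =>
    ⟨Pi.single x 1, single_mem_stdSimplex ℝ x, by simp [L]⟩
  have hconv : Convex ℝ (L '' stdSimplex ℝ X) := (convex_stdSimplex ℝ X).linear_image L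
  have hcomp : IsCompact (L '' stdSimplex ℝ X) := (isCompact_stdSimplex ℝ X).image hLc
  have hne : (L '' stdSimplex ℝ X).Nonempty := ⟨_, hmem (Classical.arbitrary X)⟩
  obtain ⟨v, hvK, hv⟩ := exists_norm_eq_iInf_of_complete_convex hne hcomp.isComplete hconv 0
  have hv' := (norm_eq_iInf_iff_real_inner_le_zero hconv hvK).1 hv
  have hcv : c ≤ ‖v‖ := by
    obtain ⟨D, hD, rfl⟩ := hvK
    rw [hL]; exact h D hD.1 hD.2
  have hvpos : 0 < ‖v‖ := hc.trans_le hcv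
  refine ⟨‖v‖⁻¹ • v, ?_, fun x => ?_⟩
  · rw [norm_smul, norm_inv, norm_norm, inv_mul_cancel₀ hvpos.ne']
  · have h1 := hv' _ (hmem x)
    rw [zero_sub, inner_neg_left, inner_sub_right, real_inner_self_eq_norm_sq] at h1
    rw [real_inner_smul_left]
    refine hcv.trans ?_
    rw [← div_eq_inv_mul, le_div_iff₀ hvpos]
    nlinarith

/-- The margin property may be witnessed in any finite-dimensional inner product space. -/
lemma hasMarginAtLeast_of_finiteDimensional {X E : Type*} [NormedAddCommGroup E]
    [InnerProductSpace ℝ E] [FiniteDimensional ℝ E] {C : Set (X → ℝ)} {γ : ℝ} (Ψ : X → E)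
    (hΨ : ∀ x, ‖Ψ x‖ ≤ 1)
    (hC : ∀ f ∈ C, ∃ w : E, ‖w‖ ≤ 1 ∧ ∀ x, γ ≤ f x * ⟪w, Ψ x⟫) : HasMarginAtLeast C γ := by
  let e := (stdOrthonormalBasis ℝ E).repr
  refine ⟨_, fun x => e (Ψ x), fun x => by simpa using hΨ x, fun f hf => ?_⟩
  obtain ⟨w, hw, h⟩ := hC f hf
  exact ⟨e w, by simpa using hw, fun x => by simpa using h x⟩

theorem stmt1 {X T : Type*} [Fintype X] [Fintype T]
    (C : Set (X → ℝ))
    (hCval : ∀ f ∈ C, ∀ x, f x = 1 ∨ f x = -1)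
    (m : ℕ) (hm : 1 ≤ m) (β : ℝ) (hβ : 0 < β)
    (μ : T → ℝ) (hμ0 : ∀ t, 0 ≤ μ t) (hμ1 : ∑ t, μ t = 1)
    (H : T → Fin m → X → ℝ)
    (hHb : ∀ t i x, |H t i x| ≤ 1)
    (hcorr : ∀ f ∈ C, ∀ D : X → ℝ, (∀ x, 0 ≤ D x) → ∑ x, D x = 1 →
      β ≤ ∑ t ∈ univ.filter (fun t =>
        ∃ i : Fin m, (1 : ℝ) / m ≤ |∑ x, D x * (f x * H t i x)|), μ t) :
    MarginComplexityLE C ((2 / β) * (m : ℝ) ^ (3 / 2 : ℝ)) := by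
  intro M' hM
  have hm0 : (0 : ℝ) < m := by exact_mod_cast hm
  let Ψ : X → EuclideanSpace ℝ (T × Fin m) := fun x =>
    WithLp.toLp 2 fun q => √(μ q.1 / m) * H q.1 q.2 x
  have hsq : ∀ t, √(μ t / m) ^ 2 = μ t / m := fun t =>
    Real.sq_sqrt (div_nonneg (hμ0 t) hm0.le)
  refine hasMarginAtLeast_of_finiteDimensional Ψ (fun x => ?_) (fun f hf => ?_)
  · rw [← sq_le_one_iff₀ (norm_nonneg _), EuclideanSpace.real_norm_sq_eq, Fintype.sum_prod_type]
    calc ∑ t, ∑ i, (√(μ t / m) * H t i x) ^ 2 ≤ ∑ t, ∑ _i : Fin m, μ t / m := by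
          refine sum_le_sum fun t _ => sum_le_sum fun i _ => ?_
          rw [mul_pow, hsq]
          exact mul_le_of_le_one_right (div_nonneg (hμ0 t) hm0.le)
            ((sq_le_one_iff_abs_le_one _).2 (hHb t i x))
      _ = 1 := by
          rw [← hμ1]
          refine sum_congr rfl fun t _ => ?_
          rw [sum_const, card_univ, Fintype.card_fin, nsmul_eq_mul]
          field_simp
  rcases isEmpty_or_nonempty X with hX | hX
  · exact ⟨0, by simp, fun x => hX.elim x⟩
  have hβ1 : β ≤ 1 := by
    obtain ⟨x⟩ := hX
    refine (hcorr f hf (Pi.single x 1) (fun y => ?_) (by simp)).trans ?_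
    · exact (single_mem_stdSimplex ℝ x).1 y
    · rw [← hμ1]
      exact sum_le_sum_of_subset_of_nonneg (filter_subset _ _) fun t _ _ => hμ0 t
  have hpow : ((m : ℝ) ^ (3 / 2 : ℝ)) ^ 2 = (m : ℝ) ^ 3 := by
    rw [← Real.rpow_natCast, ← Real.rpow_mul hm0.le]
    norm_num
  have hppos : 0 < (m : ℝ) ^ (3 / 2 : ℝ) := Real.rpow_pos_of_pos hm0 _
  have hMpos : 0 < 2 / β * (m : ℝ) ^ (3 / 2 : ℝ) := by positivity
  have hM'pos : 0 < M' := hMpos.trans hM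
  have hγ : (1 / M') ^ 2 ≤ β / (m : ℝ) ^ 3 := by
    calc (1 / M') ^ 2 ≤ (1 / (2 / β * (m : ℝ) ^ (3 / 2 : ℝ))) ^ 2 := by gcongr
      _ = (β ^ 2 / 4) / (m : ℝ) ^ 3 := by
          rw [← hpow]; field_simp; norm_num
      _ ≤ β / (m : ℝ) ^ 3 := by
          gcongr
          nlinarith
  obtain ⟨w, hw, hwx⟩ := exists_separating_of_norm_ge (fun x => f x • Ψ x)
    (one_div_pos.2 hM'pos) fun D hD0 hD1 => by
      refine (pow_le_pow_iff_left₀ (by positivity) (norm_nonneg _) two_ne_zero).1 ?_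
      refine hγ.trans ?_
      have hcoord : ∀ t i, (∑ x, D x • f x • Ψ x) (t, i)
          = √(μ t / m) * ∑ x, D x * (f x * H t i x) := by
        intro t i
        simp only [WithLp.ofLp_sum, Finset.sum_apply, PiLp.smul_apply, smul_eq_mul, Ψ, mul_sum]
        exact sum_congr rfl fun x _ => by ring
      rw [EuclideanSpace.real_norm_sq_eq, Fintype.sum_prod_type]
      simp only [hcoord, mul_pow, hsq]
      set S := univ.filter fun t => ∃ i : Fin m, (1 : ℝ) / m ≤ |∑ x, D x * (f x * H t i x)|
      have hnn : ∀ t i, 0 ≤ μ t / m * (∑ x, D x * (f x * H t i x)) ^ 2 := fun t i =>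
        mul_nonneg (div_nonneg (hμ0 t) hm0.le) (sq_nonneg _)
      calc β / (m : ℝ) ^ 3 ≤ (∑ t ∈ S, μ t) / (m : ℝ) ^ 3 := by
            gcongr
            exact hcorr f hf D hD0 hD1
        _ = ∑ t ∈ S, μ t / m * (1 / m) ^ 2 := by
            rw [sum_div]
            exact sum_congr rfl fun t _ => by field_simp
        _ ≤ ∑ t ∈ S, ∑ i, μ t / m * (∑ x, D x * (f x * H t i x)) ^ 2 := by
            refine sum_le_sum fun t ht => ?_
            obtain ⟨i, hi⟩ := (mem_filter.1 ht).2
            refine le_trans ?_ (single_le_sum (fun j _ => hnn t j) (mem_univ i))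
            rw [← sq_abs (∑ x, D x * (f x * H t i x))]
            have := hμ0 t
            gcongr
        _ ≤ ∑ t, ∑ i, μ t / m * (∑ x, D x * (f x * H t i x)) ^ 2 :=
            sum_le_sum_of_subset_of_nonneg (filter_subset _ _) fun t _ _ =>
              sum_nonneg fun i _ => hnn t i
  refine ⟨w, hw, fun x => ?_⟩
  have := hwx x
  rwa [real_inner_smul_right] at this
end

section
/- There is a constant c > 0 such that for every dimension d ≥ 1 the class C_HS of halfspaces over {0,1}^d has margin complexity at least 2^{c·d}: that is, for every N, every map Ψ: {0,1}^d → ℝ^N with ‖Ψ(x)‖₂ ≤ 1 for all x, and every assignment of vectors w_f ∈ ℝ^N with ‖w_f‖₂ ≤ 1 to functions f ∈ C_HS such that f(x)·⟨w_f, Ψ(x)⟩ ≥ γ for all f ∈ C_HS and x ∈ {0,1}^d, one must have γ ≤ 2^{−c·d}. -/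
/-!
Halfspaces with exponentially large integer weights are hard to embed with a margin.

Fix `m ≥ 1`, let `p` assign to every coordinate `i` a pair `(b, c) ∈ {0, …, m-1}²`, and put
`L p x = ∑ i, (b i + c i) x i`, an integer in `[0, 2dm]`. For an integer threshold `t` the function
`x ↦ if t ≤ L p x then 1 else -1` is a halfspace. The signed weight
`M (p, t) x = [t = L p x] - [t = L p x + 1]` agrees in sign with this halfspace wherever it is
nonzero, so a margin `γ` forces `∑ M (p, t) x ⟪w, Ψ x⟫ ≥ 2 γ K 2^d`, where `K = m^(2d)` is the
number of the `p`.

By Cauchy-Schwarz the square of the left side is at most the number of rows `(p, t)` times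
`∑ x y, |∑ (p, t), M (p, t) x * M (p, t) y|` (`bilinear_sq_le`). Summing over `t` gives
`∑ p, φ (L p x - L p y)` with `φ` the negated second difference of the delta function at `0`. If
`x i ≠ y i`, summing `φ` over the pair `p i` telescopes twice, so the sum over `p` is at most
`2 K / m²` (`gram_offdiag`), while for `x = y` it is `2 K`. For `m² ≤ 2^d` this yields
`γ² ≤ 3 d / m` (`margin_sq_le`); take `m = 2^⌊d/2⌋`. For small `d` the parallelogram law
applied to two points and two halfspaces gives `γ² ≤ 1/2` (`margin_sq_le_half`).
-/

open Finset RealInnerProductSpace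
open scoped BigOperators

/-- `f` is a halfspace over `{0,1}^d`: a `±1`-valued function realized by some linear
threshold `⟨a, x⟩ − θ`. -/
def IsHalfspace {d : ℕ} (f : (Fin d → Bool) → ℝ) : Prop :=
  (∀ x, f x = 1 ∨ f x = -1) ∧
  ∃ (a : Fin d → ℝ) (θ : ℝ),
    ∀ x, 0 < f x * ((∑ i, a i * (if x i then (1 : ℝ) else 0)) - θ)

namespace HalfspaceMargin

/-- The delta function at `0`. -/
noncomputable def delta (t : ℤ) : ℝ := if t = 0 then 1 else 0

/-- The negated second difference of `delta`. -/
noncomputable def phi (t : ℤ) : ℝ := 2 * delta t - delta (t - 1) - delta (t + 1)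

lemma delta_neg (t : ℤ) : delta (-t) = delta t := by simp [delta]

lemma phi_neg (t : ℤ) : phi (-t) = phi t := by
  unfold phi
  rw [delta_neg, ← delta_neg (-t - 1), ← delta_neg (-t + 1)]
  ring_nf

lemma delta_nonneg (t : ℤ) : 0 ≤ delta t := by unfold delta; split_ifs <;> norm_num

lemma delta_le_one (t : ℤ) : delta t ≤ 1 := by unfold delta; split_ifs <;> norm_num

lemma sum_fin_telescope (m : ℕ) (g : ℤ → ℝ) (s : ℤ) :
    ∑ b : Fin m, (g ((b : ℕ) + s) - g ((b : ℕ) + s + 1)) = g s - g (m + s) := by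
  rw [Fin.sum_univ_eq_sum_range (fun b : ℕ => g ((b : ℤ) + s) - g ((b : ℤ) + s + 1)) m]
  have h := Finset.sum_range_sub' (fun b : ℕ => g ((b : ℤ) + s)) m
  simp only [Nat.cast_add, Nat.cast_one, Nat.cast_zero, zero_add] at h
  rw [← h]
  refine Finset.sum_congr rfl fun b _ => ?_
  rw [add_right_comm]

/-- Two telescoping sums undo the second difference, so the bound does not depend on `m`. -/
lemma abs_sum_phi_le (m : ℕ) (s : ℤ) :
    |∑ q : Fin m × Fin m, phi (((q.1 : ℕ) : ℤ) + ((q.2 : ℕ) : ℤ) + s)| ≤ 2 := by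
  have inner (u : ℤ) : ∑ b : Fin m, phi (((b : ℕ) : ℤ) + u) =
      (delta u - delta (u - 1)) - (delta (m + u) - delta (m + u - 1)) := by
    rw [← sum_fin_telescope m (fun t => delta t - delta (t - 1)) u]
    refine Finset.sum_congr rfl fun b _ => ?_
    simp only [phi, add_sub_cancel_right]
    ring
  have outer (v : ℤ) : ∑ b : Fin m, (delta (((b : ℕ) : ℤ) + v) - delta (((b : ℕ) : ℤ) + v - 1)) =
      - delta (v - 1) + delta (m + v - 1) := by
    have := sum_fin_telescope m (fun t => - delta (t - 1)) v
    simp only [add_sub_cancel_right, sub_neg_eq_add] at this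
    rw [← this]
    refine Finset.sum_congr rfl fun b _ => ?_
    ring
  have key : ∑ q : Fin m × Fin m, phi (((q.1 : ℕ) : ℤ) + ((q.2 : ℕ) : ℤ) + s) =
      (- delta (s - 1) + delta (m + s - 1)) -
        (- delta (m + s - 1) + delta (m + (m + s) - 1)) := by
    rw [Fintype.sum_prod_type_right, ← outer s, ← outer (m + s), ← Finset.sum_sub_distrib]
    refine Finset.sum_congr rfl fun c _ => ?_
    have := inner (((c : ℕ) : ℤ) + s)
    simp only [← add_assoc] at this ⊢
    rw [this]
    simp only [add_comm (m : ℤ)]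
  rw [key, abs_le]
  constructor <;>
    linarith [delta_nonneg (s - 1), delta_nonneg (m + s - 1), delta_nonneg (m + (m + s) - 1),
      delta_le_one (s - 1), delta_le_one (m + s - 1), delta_le_one (m + (m + s) - 1)]

/-- The integer linear form with weights `(p i).1 + (p i).2`. -/
def lin {d m : ℕ} (p : Fin d → Fin m × Fin m) (x : Fin d → Bool) : ℤ :=
  ∑ i, (((p i).1 : ℕ) + ((p i).2 : ℕ) : ℤ) * (if x i then 1 else 0)

lemma lin_nonneg {d m : ℕ} (p : Fin d → Fin m × Fin m) (x : Fin d → Bool) : 0 ≤ lin p x := by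
  unfold lin
  refine Finset.sum_nonneg fun i _ => ?_
  split_ifs <;> positivity

lemma lin_lt {d m : ℕ} (hd : 1 ≤ d) (p : Fin d → Fin m × Fin m) (x : Fin d → Bool) :
    lin p x + 1 ≤ 2 * d * m := by
  have h : lin p x ≤ ∑ _i : Fin d, (2 * (m : ℤ) - 1) := by
    unfold lin
    refine Finset.sum_le_sum fun i _ => ?_
    have h1 := (p i).1.isLt
    have h2 := (p i).2.isLt
    split_ifs <;> omega
  simp only [Finset.sum_const, Finset.card_univ, Fintype.card_fin, nsmul_eq_mul] at h
  have : (1 : ℤ) ≤ d := by exact_mod_cast hd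
  linarith

lemma gram_offdiag {d m : ℕ} (x y : Fin d → Bool) (hxy : x ≠ y) :
    |∑ p : Fin d → Fin m × Fin m, phi (lin p x - lin p y)| * (m : ℝ) ^ 2 ≤
      2 * Fintype.card (Fin d → Fin m × Fin m) := by
  obtain ⟨i, hi⟩ := Function.ne_iff.mp hxy
  set e := Equiv.funSplitAt i (Fin m × Fin m) with he
  have hcard : (Fintype.card (Fin d → Fin m × Fin m) : ℝ) =
      (m : ℝ) ^ 2 * Fintype.card ({j // j ≠ i} → Fin m × Fin m) := by
    rw [Fintype.card_congr e, Fintype.card_prod, Fintype.card_prod, Fintype.card_fin]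
    push_cast
    ring
  have hsum : |∑ p : Fin d → Fin m × Fin m, phi (lin p x - lin p y)| ≤
      2 * Fintype.card ({j // j ≠ i} → Fin m × Fin m) := by
    rw [← e.symm.sum_comp, Fintype.sum_prod_type_right]
    refine (Finset.abs_sum_le_sum_abs _ _).trans ?_
    have hrow : ∀ r : {j // j ≠ i} → Fin m × Fin m,
        |∑ q : Fin m × Fin m, phi (lin (e.symm (q, r)) x - lin (e.symm (q, r)) y)| ≤ 2 := by
      intro r
      let ε : Fin d → ℤ := fun j => (if x j then 1 else 0) - (if y j then 1 else 0)
      let s : ℤ := ∑ j : {j // j ≠ i}, (((r j).1 : ℕ) + ((r j).2 : ℕ) : ℤ) * ε j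
      have hD (q : Fin m × Fin m) : lin (e.symm (q, r)) x - lin (e.symm (q, r)) y =
          (((q.1 : ℕ) : ℤ) + ((q.2 : ℕ) : ℤ)) * ε i + s := by
        unfold lin
        rw [← Finset.sum_sub_distrib, Fintype.sum_eq_add_sum_subtype_ne _ i]
        congr 1
        · simp [he, ε, mul_sub]
        · refine Finset.sum_congr rfl fun j _ => ?_
          have : e.symm (q, r) j = r j := by simp [he, j.2]
          rw [this, ← mul_sub]
      simp only [hD]
      have hε : ε i = 1 ∨ ε i = -1 := by
        simp only [ε]
        revert hi
        cases x i <;> cases y i <;> simp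
      rcases hε with h | h
      · simpa only [h, mul_one] using abs_sum_phi_le m s
      · -- `phi` is even, so the sign of the isolated coordinate is irrelevant
        have := abs_sum_phi_le m (-s)
        rw [h]
        refine le_of_eq_of_le (congrArg _ (Finset.sum_congr rfl fun q _ => ?_)) this
        rw [← phi_neg]
        congr 1
        ring
    calc _ ≤ ∑ _r : {j // j ≠ i} → Fin m × Fin m, (2 : ℝ) := Finset.sum_le_sum fun r _ => hrow r
      _ = _ := by simp [mul_comm]
  rw [hcard]
  nlinarith [sq_nonneg (m : ℝ)]

/-- The signed weight `[t = L p x] - [t = L p x + 1]` of the pair (halfspace, point). -/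
noncomputable def wt {d m : ℕ} (r : (Fin d → Fin m × Fin m) × ℤ) (x : Fin d → Bool) : ℝ :=
  (if r.2 = lin r.1 x then 1 else 0) - (if r.2 = lin r.1 x + 1 then 1 else 0)

/-- The halfspace `L p x ≥ t`. -/
noncomputable def hs {d m : ℕ} (r : (Fin d → Fin m × Fin m) × ℤ) (x : Fin d → Bool) : ℝ :=
  if r.2 ≤ lin r.1 x then 1 else -1

lemma isHalfspace_hs {d m : ℕ} (r : (Fin d → Fin m × Fin m) × ℤ) : IsHalfspace (hs r) := by
  refine ⟨fun x => by unfold hs; split_ifs <;> simp,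
    fun i => (((r.1 i).1 : ℕ) : ℝ) + (((r.1 i).2 : ℕ) : ℝ), (r.2 : ℝ) - 1 / 2, fun x => ?_⟩
  have h : ∑ i, ((((r.1 i).1 : ℕ) : ℝ) + (((r.1 i).2 : ℕ) : ℝ)) * (if x i then (1 : ℝ) else 0) =
      (lin r.1 x : ℝ) := by
    unfold lin
    push_cast
    rfl
  rw [h]
  unfold hs
  split_ifs with hle
  · have : (r.2 : ℝ) ≤ lin r.1 x := by exact_mod_cast hle
    linarith
  · have : (lin r.1 x : ℝ) + 1 ≤ r.2 := by exact_mod_cast (not_le.mp hle)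
    linarith

/-- Cauchy-Schwarz: the bilinear form of `M` on unit vectors is controlled by the entries of the
Gram matrix of its columns. -/
lemma bilinear_sq_le {R X E : Type*} [Fintype X] [NormedAddCommGroup E] [InnerProductSpace ℝ E]
    (S : Finset R) (M : R → X → ℝ) (w : R → E) (Ψ : X → E)
    (hw : ∀ r, ‖w r‖ ≤ 1) (hΨ : ∀ x, ‖Ψ x‖ ≤ 1)
    (h0 : 0 ≤ ∑ r ∈ S, ∑ x, M r x * ⟪w r, Ψ x⟫) :
    (∑ r ∈ S, ∑ x, M r x * ⟪w r, Ψ x⟫) ^ 2 ≤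
      S.card * ∑ x, ∑ y, |∑ r ∈ S, M r x * M r y| := by
  have h1 : ∑ r ∈ S, ∑ x, M r x * ⟪w r, Ψ x⟫ ≤ ∑ r ∈ S, ‖∑ x, M r x • Ψ x‖ := by
    refine Finset.sum_le_sum fun r _ => ?_
    have : ∑ x, M r x * ⟪w r, Ψ x⟫ = ⟪w r, ∑ x, M r x • Ψ x⟫ := by
      simp only [inner_sum, inner_smul_right]
    rw [this]
    exact (real_inner_le_norm _ _).trans (mul_le_of_le_one_left (norm_nonneg _) (hw r))
  have h2 : ∑ r ∈ S, ‖∑ x, M r x • Ψ x‖ ^ 2 =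
      ∑ x, ∑ y, (∑ r ∈ S, M r x * M r y) * ⟪Ψ x, Ψ y⟫ := by
    have hr (r : R) : ‖∑ x, M r x • Ψ x‖ ^ 2 = ∑ x, ∑ y, M r x * M r y * ⟪Ψ x, Ψ y⟫ := by
      rw [← real_inner_self_eq_norm_sq, sum_inner]
      refine Finset.sum_congr rfl fun x _ => ?_
      rw [inner_sum]
      refine Finset.sum_congr rfl fun y _ => ?_
      rw [real_inner_smul_left, real_inner_smul_right]
      ring
    simp only [hr, Finset.sum_mul]
    rw [Finset.sum_comm]
    refine Finset.sum_congr rfl fun x _ => ?_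
    rw [Finset.sum_comm]
  have h3 : ∑ x, ∑ y, (∑ r ∈ S, M r x * M r y) * ⟪Ψ x, Ψ y⟫ ≤
      ∑ x, ∑ y, |∑ r ∈ S, M r x * M r y| := by
    refine Finset.sum_le_sum fun x _ => Finset.sum_le_sum fun y _ => ?_
    refine (le_abs_self _).trans ?_
    rw [abs_mul]
    refine mul_le_of_le_one_right (abs_nonneg _) ?_
    exact (abs_real_inner_le_norm _ _).trans (mul_le_one₀ (hΨ x) (norm_nonneg _) (hΨ y))
  calc _ ≤ (∑ r ∈ S, ‖∑ x, M r x • Ψ x‖) ^ 2 := pow_le_pow_left₀ h0 h1 2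
    _ ≤ S.card * ∑ r ∈ S, ‖∑ x, M r x • Ψ x‖ ^ 2 := sq_sum_le_card_mul_sum_sq
    _ ≤ _ := by rw [h2]; gcongr

lemma sum_wt_mul_wt {d m : ℕ} (hd : 1 ≤ d) (p : Fin d → Fin m × Fin m) (x y : Fin d → Bool) :
    ∑ t ∈ Finset.Icc (0 : ℤ) (2 * d * m), wt (p, t) x * wt (p, t) y = phi (lin p x - lin p y) := by
  have hx0 := lin_nonneg p x
  have hx1 := lin_lt hd p x
  have m0 : lin p x ∈ Finset.Icc (0 : ℤ) (2 * d * m) := by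
    rw [Finset.mem_Icc]; constructor <;> linarith
  have m1 : lin p x + 1 ∈ Finset.Icc (0 : ℤ) (2 * d * m) := by
    rw [Finset.mem_Icc]; constructor <;> linarith
  simp only [wt, sub_mul, ite_mul, one_mul, zero_mul, Finset.sum_sub_distrib,
    Finset.sum_ite_eq', m0, m1, if_true]
  unfold phi delta
  split_ifs <;> first | omega | norm_num

lemma sum_indicators {d m : ℕ} (hd : 1 ≤ d) (p : Fin d → Fin m × Fin m) (x : Fin d → Bool) :
    ∑ t ∈ Finset.Icc (0 : ℤ) (2 * d * m),
      ((if t = lin p x then (1 : ℝ) else 0) + (if t = lin p x + 1 then 1 else 0)) = 2 := by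
  have hx0 := lin_nonneg p x
  have hx1 := lin_lt hd p x
  have m0 : lin p x ∈ Finset.Icc (0 : ℤ) (2 * d * m) := by
    rw [Finset.mem_Icc]; constructor <;> linarith
  have m1 : lin p x + 1 ∈ Finset.Icc (0 : ℤ) (2 * d * m) := by
    rw [Finset.mem_Icc]; constructor <;> linarith
  simp only [Finset.sum_add_distrib, Finset.sum_ite_eq', m0, m1, if_true]
  norm_num

lemma margin_sq_le {d m N : ℕ} (hd : 1 ≤ d) (hm : 1 ≤ m) (hmd : m ^ 2 ≤ 2 ^ d)
    (Ψ : (Fin d → Bool) → EuclideanSpace ℝ (Fin N)) (γ : ℝ) (hγ : 0 ≤ γ)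
    (w : ((Fin d → Bool) → ℝ) → EuclideanSpace ℝ (Fin N))
    (hΨ : ∀ x, ‖Ψ x‖ ≤ 1) (hw : ∀ f, IsHalfspace f → ‖w f‖ ≤ 1)
    (hmar : ∀ f, IsHalfspace f → ∀ x, γ ≤ f x * ⟪w f, Ψ x⟫) :
    γ ^ 2 * m ≤ 3 * d := by
  set K : ℝ := ((Fintype.card (Fin d → Fin m × Fin m) : ℕ) : ℝ) with hK
  have hmR : (1 : ℝ) ≤ m := by exact_mod_cast hm
  have hdR : (1 : ℝ) ≤ d := by exact_mod_cast hd
  have hKpos : 0 < K := by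
    have : Nonempty (Fin m × Fin m) := ⟨(⟨0, hm⟩, ⟨0, hm⟩)⟩
    rw [hK]
    exact_mod_cast Fintype.card_pos
  let S : Finset ((Fin d → Fin m × Fin m) × ℤ) :=
    Finset.univ ×ˢ Finset.Icc (0 : ℤ) (2 * d * m)
  have hScard : (S.card : ℝ) = K * (2 * d * m + 1) := by
    have : ((2 * d * m + 1 : ℤ)).toNat = 2 * d * m + 1 := by
      have : (2 * d * m + 1 : ℤ) = ((2 * d * m + 1 : ℕ) : ℤ) := by push_cast; ring
      rw [this, Int.toNat_natCast]
    simp only [S, Finset.card_product, Int.card_Icc, sub_zero, this, Finset.card_univ, hK]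
    push_cast
    ring
  have hlow : γ * (2 * K * 2 ^ d) ≤ ∑ r ∈ S, ∑ x, wt r x * ⟪w (hs r), Ψ x⟫ := by
    have hterm : ∀ (r : (Fin d → Fin m × Fin m) × ℤ) (x : Fin d → Bool),
        γ * ((if r.2 = lin r.1 x then (1 : ℝ) else 0) +
          (if r.2 = lin r.1 x + 1 then 1 else 0)) ≤ wt r x * ⟪w (hs r), Ψ x⟫ := by
      intro r x
      have h := hmar (hs r) (isHalfspace_hs r) x
      unfold wt
      by_cases h1 : r.2 = lin r.1 x
      · have e : hs r x = 1 := if_pos h1.le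
        have h2 : ¬ r.2 = lin r.1 x + 1 := by omega
        rw [if_pos h1, if_neg h2]
        rw [e] at h
        linarith
      · by_cases h2 : r.2 = lin r.1 x + 1
        · have e : hs r x = -1 := if_neg (by omega)
          rw [if_neg h1, if_pos h2]
          rw [e] at h
          linarith
        · simp [if_neg h1, if_neg h2]
    calc γ * (2 * K * 2 ^ d) = ∑ r ∈ S, ∑ x : Fin d → Bool,
          γ * ((if r.2 = lin r.1 x then (1 : ℝ) else 0) +
            (if r.2 = lin r.1 x + 1 then 1 else 0)) := by
          rw [Finset.sum_comm]
          simp only [S, Finset.sum_product, ← Finset.mul_sum, sum_indicators hd]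
          simp only [Finset.sum_const, Finset.card_univ, nsmul_eq_mul, ← hK]
          simp only [Fintype.card_fun, Fintype.card_bool, Fintype.card_fin]
          push_cast
          ring
      _ ≤ _ := Finset.sum_le_sum fun r _ => Finset.sum_le_sum fun x _ => hterm r x
  have hlow0 : 0 ≤ γ * (2 * K * 2 ^ d) := by positivity
  have hgram : ∑ x : Fin d → Bool, ∑ y : Fin d → Bool, |∑ r ∈ S, wt r x * wt r y| ≤
      2 ^ d * (2 * K) + 2 ^ d * 2 ^ d * (2 * K / m ^ 2) := by
    have hent : ∀ x y : Fin d → Bool, |∑ r ∈ S, wt r x * wt r y| ≤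
        (if x = y then 2 * K else 0) + 2 * K / m ^ 2 := by
      intro x y
      simp only [S, Finset.sum_product, sum_wt_mul_wt hd]
      by_cases hxy : x = y
      · subst hxy
        have : phi 0 = 2 := by simp [phi, delta]
        simp only [sub_self, this, Finset.sum_const, Finset.card_univ, nsmul_eq_mul, if_true]
        rw [← hK, abs_of_pos (by positivity)]
        have : 0 ≤ 2 * K / m ^ 2 := by positivity
        linarith
      · rw [if_neg hxy, zero_add, le_div_iff₀ (by positivity)]
        exact gram_offdiag x y hxy
    refine (Finset.sum_le_sum fun x _ => Finset.sum_le_sum fun y _ => hent x y).trans ?_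
    simp [Finset.sum_add_distrib]
    linarith
  have hcs := bilinear_sq_le S wt (fun r => w (hs r)) Ψ
    (fun r => hw _ (isHalfspace_hs r)) hΨ (hlow0.trans hlow)
  have hmain : (γ * (2 * K * 2 ^ d)) ^ 2 ≤
      K * (2 * d * m + 1) * (2 ^ d * (2 * K) + 2 ^ d * 2 ^ d * (2 * K / m ^ 2)) := by
    refine (pow_le_pow_left₀ hlow0 hlow 2).trans (hcs.trans ?_)
    rw [hScard]
    gcongr
  -- the diagonal term is dominated by the off-diagonal one since `m ^ 2 ≤ 2 ^ d`
  have hmd' : (m : ℝ) ^ 2 ≤ 2 ^ d := by exact_mod_cast hmd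
  have hdiag : (2 : ℝ) ^ d * (2 * K) ≤ 2 ^ d * 2 ^ d * (2 * K / m ^ 2) := by
    rw [mul_assoc]
    refine mul_le_mul_of_nonneg_left ?_ (by positivity)
    rw [mul_div_assoc', le_div_iff₀ (by positivity)]
    nlinarith
  have hT : 2 * (d : ℝ) * m + 1 ≤ 3 * d * m := by nlinarith
  have hfin : (γ * (2 * K * 2 ^ d)) ^ 2 ≤
      K * (3 * d * m) * (2 * (2 ^ d * 2 ^ d * (2 * K / m ^ 2))) := by
    refine hmain.trans ?_
    gcongr
    linarith
  have e1 : K * (3 * d * m) * (2 * (2 ^ d * 2 ^ d * (2 * K / m ^ 2))) =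
      (2 * K * 2 ^ d) ^ 2 * (3 * d / m) := by
    field_simp
  rw [e1, mul_pow, mul_comm (γ ^ 2)] at hfin
  have := le_of_mul_le_mul_left hfin (by positivity)
  rwa [le_div_iff₀ (by positivity)] at this

lemma margin_sq_le_half {d N : ℕ} (hd : 1 ≤ d)
    (Ψ : (Fin d → Bool) → EuclideanSpace ℝ (Fin N)) (γ : ℝ) (hγ : 0 ≤ γ)
    (w : ((Fin d → Bool) → ℝ) → EuclideanSpace ℝ (Fin N))
    (hΨ : ∀ x, ‖Ψ x‖ ≤ 1) (hw : ∀ f, IsHalfspace f → ‖w f‖ ≤ 1)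
    (hmar : ∀ f, IsHalfspace f → ∀ x, γ ≤ f x * ⟪w f, Ψ x⟫) :
    γ ^ 2 ≤ 1 / 2 := by
  let i : Fin d := ⟨0, hd⟩
  have hf : IsHalfspace (fun _ : Fin d → Bool => (1 : ℝ)) :=
    ⟨fun _ => Or.inl rfl, 0, -1, fun x => by simp⟩
  have hg : IsHalfspace (fun x : Fin d → Bool => if x i then (1 : ℝ) else -1) := by
    refine ⟨fun x => by dsimp only; split_ifs <;> simp, Pi.single i 1, 1 / 2, fun x => ?_⟩
    have : ∑ j, (Pi.single i (1 : ℝ) : Fin d → ℝ) j * (if x j then (1 : ℝ) else 0) =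
        if x i then 1 else 0 := by
      rw [Finset.sum_eq_single i (fun j _ hj => by simp [hj]) (by simp)]
      simp
    rw [this]
    dsimp only
    split_ifs <;> norm_num
  let a := Ψ fun _ => true
  let b := Ψ fun _ => false
  have f1 := hmar _ hf fun _ => true
  have f2 := hmar _ hf fun _ => false
  have g1 := hmar _ hg fun _ => true
  have g2 := hmar _ hg fun _ => false
  simp only [if_true, one_mul, Bool.false_eq_true, if_false] at f1 f2 g1 g2
  have s1 : 2 * γ ≤ ‖a + b‖ := by
    refine le_trans ?_ ((real_inner_le_norm _ _).trans
      (mul_le_of_le_one_left (norm_nonneg (a + b)) (hw _ hf)))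
    rw [inner_add_right]
    linarith
  have s2 : 2 * γ ≤ ‖a - b‖ := by
    refine le_trans ?_ ((real_inner_le_norm _ _).trans
      (mul_le_of_le_one_left (norm_nonneg (a - b)) (hw _ hg)))
    rw [inner_sub_right]
    linarith
  have hpar := parallelogram_law_with_norm ℝ a b
  have ha : ‖a‖ ≤ 1 := hΨ _
  have hb : ‖b‖ ≤ 1 := hΨ _
  nlinarith [norm_nonneg a, norm_nonneg b, norm_nonneg (a + b), norm_nonneg (a - b)]

lemma pow_bound (d : ℕ) (hd : 40 ≤ d) : 3 * d * 2 ^ (d / 40 + 1) ≤ 2 ^ (d / 2) := by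
  set q := d / 40 with hq
  have h1 : d ≤ 40 * (q + 1) := by omega
  have h2 : 20 * q ≤ d / 2 := by omega
  have h3 : q + 1 ≤ 2 ^ q := Nat.lt_two_pow_self
  have h4 : 1 ≤ q := by omega
  calc 3 * d * 2 ^ (q + 1) ≤ 3 * (40 * (q + 1)) * 2 ^ (q + 1) := by gcongr
    _ ≤ 3 * (40 * 2 ^ q) * 2 ^ (q + 1) := by gcongr
    _ = 240 * 2 ^ (q + q) := by rw [pow_succ, pow_add]; ring
    _ ≤ 2 ^ 8 * 2 ^ (q + q) := by gcongr; norm_num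
    _ = 2 ^ (8 + (q + q)) := (pow_add _ _ _).symm
    _ ≤ 2 ^ (d / 2) := Nat.pow_le_pow_right (by norm_num) (by omega)

end HalfspaceMargin

open HalfspaceMargin in
theorem stmt3 :
    ∃ c : ℝ, 0 < c ∧
      ∀ d : ℕ, 1 ≤ d →
        ∀ (N : ℕ) (Ψ : (Fin d → Bool) → EuclideanSpace ℝ (Fin N)) (γ : ℝ)
          (w : ((Fin d → Bool) → ℝ) → EuclideanSpace ℝ (Fin N)),
          (∀ x, ‖Ψ x‖ ≤ 1) →
          (∀ f, IsHalfspace f → ‖w f‖ ≤ 1) →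
          (∀ f, IsHalfspace f → ∀ x, γ ≤ f x * ⟪w f, Ψ x⟫) →
          γ ≤ (2 : ℝ) ^ (-(c * (d : ℝ))) := by
  refine ⟨1 / 80, by norm_num, fun d hd N Ψ γ w hΨ hw hmar => ?_⟩
  rcases le_or_gt γ 0 with hγ | hγ
  · exact hγ.trans (by positivity)
  -- the claim is compared after squaring, as `γ ^ 2 ≤ 2 ^ (-d / 40)`
  refine le_of_sq_le_sq ?_ (by positivity)
  have hsq : ((2 : ℝ) ^ (-(1 / 80 * (d : ℝ)))) ^ 2 = (2 : ℝ) ^ (-((d : ℝ) / 40)) := by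
    rw [← Real.rpow_natCast, ← Real.rpow_mul (by norm_num)]
    congr 1
    push_cast
    ring
  rw [hsq]
  rcases lt_or_ge d 40 with h40 | h40
  · refine (margin_sq_le_half hd Ψ γ hγ.le w hΨ hw hmar).trans ?_
    have : (1 / 2 : ℝ) = 2 ^ (-1 : ℝ) := by rw [Real.rpow_neg_one]; norm_num
    rw [this]
    refine Real.rpow_le_rpow_of_exponent_le (by norm_num) ?_
    have : (d : ℝ) ≤ 40 := by exact_mod_cast h40.le
    linarith
  · have hb := margin_sq_le (m := 2 ^ (d / 2)) hd Nat.one_le_two_pow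
      (by rw [← pow_mul]; exact Nat.pow_le_pow_right (by norm_num) (by omega))
      Ψ γ hγ.le w hΨ hw hmar
    have hp : (3 * d * 2 ^ (d / 40 + 1) : ℝ) ≤ 2 ^ (d / 2) := by exact_mod_cast pow_bound d h40
    push_cast at hb
    have hd0 : (0 : ℝ) < d := by exact_mod_cast hd
    have h1 : γ ^ 2 * 2 ^ (d / 40 + 1) ≤ 1 := by
      have : γ ^ 2 * (3 * d * 2 ^ (d / 40 + 1)) ≤ 3 * d := le_trans (by gcongr) hb
      refine le_of_mul_le_mul_left (a := 3 * (d : ℝ)) ?_ (by positivity)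
      linarith
    have h2 : (2 : ℝ) ^ ((d : ℝ) / 40) ≤ 2 ^ (d / 40 + 1) := by
      rw [← Real.rpow_natCast 2 (d / 40 + 1)]
      refine Real.rpow_le_rpow_of_exponent_le (by norm_num) ?_
      rw [div_le_iff₀ (by norm_num)]
      exact_mod_cast (by omega : d ≤ (d / 40 + 1) * 40)
    rw [Real.rpow_neg (by norm_num), ← one_div, le_div_iff₀ (by positivity)]
    exact le_trans (by gcongr) h1
end

section
/- There is a constant c > 0 such that for every dimension d ≥ 1 the class C_DL of decision lists over {0,1}^d has margin complexity at least 2^{c·d^{1/3}}: that is, for every N, every map Ψ: {0,1}^d → ℝ^N with ‖Ψ(x)‖₂ ≤ 1 for all x, and every assignment of vectors w_f ∈ ℝ^N with ‖w_f‖₂ ≤ 1 to functions f ∈ C_DL such that f(x)·⟨w_f, Ψ(x)⟩ ≥ γ for all f ∈ C_DL and x ∈ {0,1}^d, one must have γ ≤ 2^{−c·d^{1/3}}. -/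
/-!
The proof combines Sherstov's pattern-matrix method with Beigel's argument for the odd-max-bit
function.

Fix `D` with `8 D³ ≤ d`, and let `g` be the sign function on `n = 4 D³` bits, grouped into `D`
blocks of `4 D²`, whose value is determined by the parity of the index of the highest nonzero
block. Put two bits of `x ∈ {0,1}^d` in place of each bit of `g`. For every selection `V` of one bit
from each pair and every shift `w`, the function `x ↦ g(x|_V ⊕ w)` is a decision list. Averaging the
inner products of a margin-`γ` realization over all `(x, V, w)` with `x|_V ⊕ w = z` gives a function
`p(z)` with `g p ≥ γ`. Cauchy–Schwarz and Parseval show that its Fourier coefficients satisfy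
`∑_S √2^|S| |p̂(S)| ≤ 1` (`exists_decaying_poly`), so discarding the coefficients above level `D`
changes `p` by at most `√2^(-D)`.

If `γ > 2 · √2^(-D)`, the truncation `Q` has degree at most `D`, coefficients of total absolute
value at most `1`, and `g Q ≥ γ / 2`. Starting from `z = 0` and raising bits in one further block at
a time flips the sign of `Q`, and Markov's inequality for polynomials shows that in each block some
choice of bits at least doubles `|Q|` (`doubling_step`). After `D` blocks, `2^D γ / 2 ≤ |Q| ≤ 1`
(`amplification`), a contradiction. Hence `γ ≤ 2 · √2^(-D)` (`margin_le`), which is `2^(-Ω(d^(1/3)))`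
for large `d`; for small `d` the bound `γ ≤ 1 / √2` (`margin_le_base`) suffices.
-/

open Finset RealInnerProductSpace
open scoped BigOperators

/-- A literal over `{0,1}^d`: either a coordinate `x_i` or its negation. -/
def IsLiteral {d : ℕ} (ℓ : (Fin d → Bool) → Bool) : Prop :=
  ∃ i : Fin d, ℓ = (fun x => x i) ∨ ℓ = (fun x => !(x i))

/-- Evaluation of a decision list given by a sequence of (literal, output) pairs and a
default value: output the value attached to the first literal evaluating to `true`,
or the default value if none does. -/
def dlEval {d : ℕ} (L : List (((Fin d → Bool) → Bool) × ℝ)) (dflt : ℝ)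
    (x : Fin d → Bool) : ℝ :=
  match L with
  | [] => dflt
  | (l, b) :: rest => if l x then b else dlEval rest dflt x

/-- `f` is a decision list over `{0,1}^d`. -/
def IsDecisionList {d : ℕ} (f : (Fin d → Bool) → ℝ) : Prop :=
  ∃ (L : List (((Fin d → Bool) → Bool) × ℝ)) (dflt : ℝ),
    (∀ p ∈ L, IsLiteral p.1 ∧ (p.2 = 1 ∨ p.2 = -1)) ∧
    (dflt = 1 ∨ dflt = -1) ∧
    f = dlEval L dflt

/-! ### Fourier analysis on the Boolean cube -/

/-- The character `χ_S(z) = ∏_{i ∈ S} (-1)^{z_i}` of the cube `{0,1}^α`. -/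
noncomputable def chi {α : Type*} (S : Finset α) (z : α → Bool) : ℝ :=
  ∏ i ∈ S, (if z i then (-1 : ℝ) else 1)

lemma chi_xor {α : Type*} (S : Finset α) (a b : α → Bool) :
    chi S (fun i => xor (a i) (b i)) = chi S a * chi S b := by
  unfold chi
  rw [← Finset.prod_mul_distrib]
  refine Finset.prod_congr rfl fun i _ => ?_
  rcases ha : a i <;> rcases hb : b i <;> simp [ha, hb]

lemma abs_chi {α : Type*} (S : Finset α) (a : α → Bool) : |chi S a| = 1 := by
  unfold chi
  rw [Finset.abs_prod]
  refine Finset.prod_eq_one fun i _ => ?_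
  cases a i <;> simp

/-- Orthogonality: the sum is `∑_S χ_S(z) = ∏_i (1 + (-1)^{z_i})` for `z = a ⊕ b`. -/
lemma sum_chi {α : Type*} [Fintype α] [DecidableEq α] (a b : α → Bool) :
    ∑ S : Finset α, chi S a * chi S b = if a = b then (2 : ℝ) ^ Fintype.card α else 0 := by
  have h : ∑ S : Finset α, chi S a * chi S b
      = ∏ i : α, (1 + (if xor (a i) (b i) then (-1 : ℝ) else 1)) := by
    rw [Finset.prod_one_add, Finset.powerset_univ]
    exact Finset.sum_congr rfl fun S _ => (chi_xor S a b).symm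
  rw [h]
  split_ifs with hab
  · subst hab
    simp
    norm_num
  · obtain ⟨i, hi⟩ := Function.ne_iff.mp hab
    refine Finset.prod_eq_zero (Finset.mem_univ i) ?_
    have : xor (a i) (b i) = true := by simpa using hi
    simp [this]

/-- The Fourier coefficient `E_x χ_S(x) F(x)` of a vector-valued function on the cube. -/
noncomputable def hat {α E : Type*} [Fintype α] [DecidableEq α] [NormedAddCommGroup E]
    [InnerProductSpace ℝ E] (F : (α → Bool) → E) (S : Finset α) : E :=
  ((2 : ℝ) ^ Fintype.card α)⁻¹ • ∑ x, chi S x • F x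

lemma inner_hat {α β E : Type*} [Fintype α] [DecidableEq α] [Fintype β] [DecidableEq β]
    [NormedAddCommGroup E] [InnerProductSpace ℝ E] (F : (α → Bool) → E) (G : (β → Bool) → E)
    (S : Finset α) (T : Finset β) :
    ⟪hat F S, hat G T⟫ = ((2 : ℝ) ^ Fintype.card α)⁻¹ * ((2 : ℝ) ^ Fintype.card β)⁻¹ *
      ∑ x, ∑ y, chi S x * chi T y * ⟪F x, G y⟫ := by
  unfold hat
  rw [real_inner_smul_left, real_inner_smul_right, sum_inner, mul_assoc]
  congr 2
  refine Finset.sum_congr rfl fun x _ => ?_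
  rw [inner_sum]
  refine Finset.sum_congr rfl fun y _ => ?_
  rw [real_inner_smul_left, real_inner_smul_right, mul_assoc]

/-- Parseval, for functions into the unit ball. -/
lemma sum_norm_hat_sq_le {α E : Type*} [Fintype α] [DecidableEq α] [NormedAddCommGroup E]
    [InnerProductSpace ℝ E] (F : (α → Bool) → E) (hF : ∀ x, ‖F x‖ ≤ 1) :
    ∑ S, ‖hat F S‖ ^ 2 ≤ 1 := by
  have hN : (0 : ℝ) < 2 ^ Fintype.card α := by positivity
  have h1 : ∑ S, ‖hat F S‖ ^ 2 = ((2 : ℝ) ^ Fintype.card α)⁻¹ * ∑ x, ‖F x‖ ^ 2 := by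
    simp_rw [← real_inner_self_eq_norm_sq (hat F _), inner_hat]
    rw [← Finset.mul_sum, Finset.sum_comm]
    have : ∀ x : α → Bool, ∑ S, ∑ y, chi S x * chi S y * ⟪F x, F y⟫
        = (2 : ℝ) ^ Fintype.card α * ‖F x‖ ^ 2 := by
      intro x
      rw [Finset.sum_comm]
      simp_rw [← Finset.sum_mul, sum_chi]
      simp
    simp_rw [this]
    rw [← Finset.mul_sum]
    field_simp
  rw [h1]
  have h2 : ∑ x : α → Bool, ‖F x‖ ^ 2 ≤ ∑ x : α → Bool, (1 : ℝ) :=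
    Finset.sum_le_sum fun x _ => pow_le_one₀ (norm_nonneg _) (hF x)
  have h3 : ∑ x : α → Bool, (1 : ℝ) = 2 ^ Fintype.card α := by simp
  rw [h3] at h2
  rw [inv_mul_le_iff₀ hN]
  simpa using h2

/-! ### The pattern-matrix step -/

/-- The set `{(i, V i) : i ∈ S}` of cells that `V` selects in the blocks of `S`. -/
def pull {I : Type*} [DecidableEq I] (V : I → Bool) (S : Finset I) : Finset (I × Bool) :=
  S.image (fun i => (i, V i))

lemma chi_pull {I : Type*} [DecidableEq I] (V : I → Bool) (S : Finset I)
    (x : I × Bool → Bool) : chi (pull V S) x = chi S (fun i => x (i, V i)) := by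
  unfold chi pull
  rw [Finset.prod_image]
  intro a _ b _ h
  exact (Prod.ext_iff.mp h).1

/-- Each `T` is `pull V S` for at most one `S`, and then for at most `2 ^ (|I| - |S|)` maps `V`. -/
lemma sum_pull_le {I : Type*} [Fintype I] [DecidableEq I] (G : Finset (I × Bool) → ℝ)
    (hG : ∀ T, 0 ≤ G T) :
    ∑ V : I → Bool, ∑ S : Finset I, (2 : ℝ) ^ #S * G (pull V S)
      ≤ 2 ^ Fintype.card I * ∑ T, G T := by
  have h1 : ∀ V : I → Bool, ∀ S : Finset I, (2 : ℝ) ^ #S * G (pull V S)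
      = ∑ T, if pull V S = T then (2 : ℝ) ^ #S * G T else 0 := by
    intro V S
    simp
  simp_rw [h1]
  rw [Finset.sum_comm]
  simp_rw [Finset.sum_comm (s := (univ : Finset (I → Bool)))]
  rw [Finset.sum_comm, Finset.mul_sum]
  refine Finset.sum_le_sum fun T _ => ?_
  have hfst : ∀ (V : I → Bool) (S : Finset I), pull V S = T → S = T.image Prod.fst := by
    rintro V S rfl
    simp [pull, Finset.image_image, Function.comp_def]
  rw [Finset.sum_eq_single (T.image Prod.fst)]
  · set S := T.image Prod.fst with hS
    rw [← Finset.sum_filter, Finset.sum_const, nsmul_eq_mul, ← mul_assoc]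
    refine mul_le_mul_of_nonneg_right ?_ (hG T)
    rcases Finset.eq_empty_or_nonempty (univ.filter fun V : I → Bool => pull V S = T) with h | h
    · rw [h]
      simp
    · obtain ⟨V₀, hV₀⟩ := h
      have hV₀' : pull V₀ S = T := by simpa using hV₀
      have hsub : (univ.filter fun V : I → Bool => pull V S = T) ⊆
          Fintype.piFinset (fun i => if i ∈ S then {V₀ i} else univ) := by
        intro V hV
        have hV' : pull V S = T := by simpa using hV
        rw [Fintype.mem_piFinset]
        intro i
        split_ifs with hi
        · have : (i, V i) ∈ pull V₀ S := by
            rw [hV₀', ← hV']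
            exact Finset.mem_image_of_mem _ hi
          simp only [pull, Finset.mem_image, Prod.mk.injEq] at this
          obtain ⟨j, _, rfl, hj⟩ := this
          simp [hj]
        · simp
      have hc := Finset.card_le_card hsub
      have hcard : #(Fintype.piFinset (fun i => if i ∈ S then {V₀ i} else (univ : Finset Bool)))
          = 2 ^ (Fintype.card I - #S) := by
        rw [Fintype.card_piFinset]
        have : ∀ i, #(if i ∈ S then {V₀ i} else (univ : Finset Bool))
            = if i ∈ S then 1 else 2 := by
          intro i
          split_ifs <;> simp
        simp_rw [this]
        rw [Finset.prod_ite]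
        simp only [Finset.prod_const_one, one_mul, Finset.prod_const]
        congr 1
        rw [← Finset.card_compl]
        congr 1
        ext i
        simp
      rw [hcard] at hc
      have hle : #S ≤ Fintype.card I := Finset.card_le_univ S
      calc (#(univ.filter fun V : I → Bool => pull V S = T) : ℝ) * 2 ^ #S
          ≤ (2 : ℝ) ^ (Fintype.card I - #S) * 2 ^ #S := by
            gcongr
            exact_mod_cast hc
        _ = 2 ^ Fintype.card I := by rw [← pow_add, Nat.sub_add_cancel hle]
  · intro S _ hS
    refine Finset.sum_eq_zero fun V _ => ?_
    rw [if_neg]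
    intro h
    exact hS (hfst V S h)
  · simp

/-- If every `g(x|_V ⊕ w)` is realised with margin `γ` by vectors in the unit ball, then averaging
over `x, V, w` with `x|_V ⊕ w = z` yields a real polynomial that agrees in sign with `g` with
margin `γ` and whose Fourier coefficients decay geometrically in the level, in the `ℓ¹` sense. -/
lemma exists_decaying_poly {I E : Type*} [Fintype I] [DecidableEq I] [NormedAddCommGroup E]
    [InnerProductSpace ℝ E] (u : (I → Bool) → (I → Bool) → E) (Φ : (I × Bool → Bool) → E)
    (g : (I → Bool) → ℝ) (γ : ℝ) (hu : ∀ V w, ‖u V w‖ ≤ 1) (hΦ : ∀ x, ‖Φ x‖ ≤ 1)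
    (hg : ∀ V w x, γ ≤ g (fun i => xor (x (i, V i)) (w i)) * ⟪u V w, Φ x⟫) :
    ∃ c : Finset I → ℝ, (∑ S, √2 ^ #S * |c S| ≤ 1) ∧
      ∀ z, γ ≤ g z * ∑ S, c S * chi S z := by
  have hN : (0 : ℝ) < 2 ^ Fintype.card I := by positivity
  have hcardV : ∑ _V : I → Bool, (1 : ℝ) = 2 ^ Fintype.card I := by simp
  refine ⟨fun S => ((2 : ℝ) ^ Fintype.card I)⁻¹ * ∑ V, ⟪hat (u V) S, hat Φ (pull V S)⟫, ?_, ?_⟩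
  · -- Cauchy–Schwarz and AM–GM for each pair `(V, S)`, then Parseval for `u V` and for `Φ`.
    have h1 : ∀ S : Finset I,
        √2 ^ #S * |((2 : ℝ) ^ Fintype.card I)⁻¹ * ∑ V, ⟪hat (u V) S, hat Φ (pull V S)⟫|
        ≤ ((2 : ℝ) ^ Fintype.card I)⁻¹ *
          ∑ V, (‖hat (u V) S‖ ^ 2 + 2 ^ #S * ‖hat Φ (pull V S)‖ ^ 2) / 2 := by
      intro S
      rw [abs_mul, abs_of_pos (inv_pos.mpr hN), mul_left_comm]
      refine mul_le_mul_of_nonneg_left ?_ (inv_pos.mpr hN).le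
      refine (mul_le_mul_of_nonneg_left (Finset.abs_sum_le_sum_abs _ _) (by positivity)).trans ?_
      rw [Finset.mul_sum]
      refine Finset.sum_le_sum fun V _ => ?_
      have h2 := abs_real_inner_le_norm (hat (u V) S) (hat Φ (pull V S))
      have h3 : ((√2 : ℝ) ^ #S) ^ 2 = 2 ^ #S := by
        rw [← pow_mul, mul_comm, pow_mul, Real.sq_sqrt (by norm_num)]
      have h4 : (0 : ℝ) ≤ √2 ^ #S := by positivity
      have h5 := mul_le_mul_of_nonneg_left h2 h4
      nlinarith [sq_nonneg (‖hat (u V) S‖ - √2 ^ #S * ‖hat Φ (pull V S)‖)]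
    refine (Finset.sum_le_sum fun S _ => h1 S).trans ?_
    rw [← Finset.mul_sum, Finset.sum_comm, inv_mul_le_iff₀ hN, mul_one]
    simp_rw [← Finset.sum_div, Finset.sum_add_distrib]
    have h6 : ∑ V : I → Bool, ∑ S, ‖hat (u V) S‖ ^ 2 ≤ 2 ^ Fintype.card I := by
      rw [← hcardV]
      exact Finset.sum_le_sum fun V _ => sum_norm_hat_sq_le _ (hu V)
    have h7 := sum_pull_le (fun T => ‖hat Φ T‖ ^ 2) (fun T => by positivity)
    have h8 := mul_le_mul_of_nonneg_left (sum_norm_hat_sq_le Φ hΦ) hN.le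
    linarith
  · intro z
    have hM : (0 : ℝ) < 2 ^ Fintype.card (I × Bool) := by positivity
    have h1 : ∀ V : I → Bool, ∑ S, ⟪hat (u V) S, hat Φ (pull V S)⟫ * chi S z
        = ((2 : ℝ) ^ Fintype.card (I × Bool))⁻¹ *
          ∑ x, ⟪u V (fun i => xor (z i) (x (i, V i))), Φ x⟫ := by
      intro V
      simp_rw [inner_hat, mul_assoc _ (∑ _, _) (chi _ z), ← Finset.mul_sum]
      have : ∑ S, (∑ w, ∑ x, chi S w * chi (pull V S) x * ⟪u V w, Φ x⟫) * chi S z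
          = ∑ x, ∑ w, ∑ S, chi S w * chi S (fun i => xor (z i) (x (i, V i))) * ⟪u V w, Φ x⟫ := by
        simp_rw [Finset.sum_mul]
        rw [Finset.sum_comm]
        simp_rw [Finset.sum_comm (s := (univ : Finset (Finset I)))]
        rw [Finset.sum_comm]
        refine Finset.sum_congr rfl fun x _ => Finset.sum_congr rfl fun w _ =>
          Finset.sum_congr rfl fun S _ => ?_
        rw [chi_xor, chi_pull]
        ring
      rw [this]
      simp_rw [← Finset.sum_mul, sum_chi]
      simp only [ite_mul, zero_mul, Finset.sum_ite_eq', Finset.mem_univ, if_true]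
      rw [← Finset.mul_sum]
      field_simp
    have h2 : ∑ S, (((2 : ℝ) ^ Fintype.card I)⁻¹ * ∑ V, ⟪hat (u V) S, hat Φ (pull V S)⟫) * chi S z
        = ((2 : ℝ) ^ Fintype.card I)⁻¹ * ∑ V, ((2 : ℝ) ^ Fintype.card (I × Bool))⁻¹ *
          ∑ x, ⟪u V (fun i => xor (z i) (x (i, V i))), Φ x⟫ := by
      simp_rw [← h1, mul_assoc, ← Finset.mul_sum, Finset.sum_mul]
      rw [Finset.sum_comm]
    rw [h2, mul_left_comm, ← div_eq_inv_mul, le_div_iff₀ hN, Finset.mul_sum, ← hcardV,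
      Finset.mul_sum]
    refine Finset.sum_le_sum fun V _ => ?_
    rw [mul_one, mul_left_comm, ← div_eq_inv_mul, le_div_iff₀ hM, Finset.mul_sum]
    have hcardX : ∑ _x : I × Bool → Bool, (1 : ℝ) = 2 ^ Fintype.card (I × Bool) := by
      simp
    rw [← hcardX, Finset.mul_sum]
    refine Finset.sum_le_sum fun x _ => ?_
    have h3 := hg V (fun i => xor (z i) (x (i, V i))) x
    have h4 : (fun i => xor (x (i, V i)) (xor (z i) (x (i, V i)))) = z := by
      funext i
      cases x (i, V i) <;> cases z i <;> rfl
    rw [h4] at h3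
    simpa using h3

/-! ### Amplification along blocks -/

/-- The point obtained from `z` by raising the bits in `A` to `1`. -/
def raise {I : Type*} [DecidableEq I] (z : I → Bool) (A : Finset I) : I → Bool :=
  fun i => z i || decide (i ∈ A)

lemma chi_raise {I : Type*} [DecidableEq I] (z : I → Bool) (A S : Finset I)
    (hz : ∀ i ∈ A, z i = false) :
    chi S (raise z A) = chi S z * ∏ i ∈ A, (if i ∈ S then (-1 : ℝ) else 1) := by
  have h1 : ∏ i ∈ A, (if i ∈ S then (-1 : ℝ) else 1) = ∏ i ∈ S, (if i ∈ A then (-1 : ℝ) else 1) := by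
    rw [← Finset.prod_filter, ← Finset.prod_filter]
    refine Finset.prod_congr ?_ fun _ _ => rfl
    ext i
    simp [and_comm]
  rw [h1]
  unfold chi raise
  rw [← Finset.prod_mul_distrib]
  refine Finset.prod_congr rfl fun i _ => ?_
  by_cases hi : i ∈ A
  · simp [hi, hz i hi]
  · simp [hi]

/-- The endpoint case of Markov's inequality, `P'(1) ≤ n²`, for a polynomial with values in
`[-2M, M]` on `[-1, 1]`. -/
lemma derivative_eval_one_le (R : Polynomial ℝ) (n : ℕ) (M : ℝ) (hM : 0 < M)
    (hdeg : R.degree ≤ n)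
    (hR : ∀ t ∈ Set.Icc (-1 : ℝ) 1, -(2 * M) ≤ R.eval t ∧ R.eval t ≤ M) :
    R.derivative.eval 1 ≤ 3 * M / 2 * (n : ℝ) ^ 2 := by
  have hk : (0 : ℝ) < 3 * M / 2 := by positivity
  have hP := Polynomial.Chebyshev.eval_iterate_derivative_le_of_forall_abs_le_one (n := n)
    (P := Polynomial.C (3 * M / 2)⁻¹ * (R + Polynomial.C (M / 2))) (k := 1) (x := 1) le_rfl ?_ ?_
  · simp only [Function.iterate_one, Polynomial.Chebyshev.derivative_T_eval_one] at hP
    rw [Polynomial.derivative_C_mul] at hP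
    simp only [Polynomial.derivative_add, Polynomial.derivative_C, add_zero, Polynomial.eval_mul,
      Polynomial.eval_C] at hP
    rw [inv_mul_le_iff₀ hk] at hP
    simpa using hP
  · refine (Polynomial.degree_C_mul (inv_pos.mpr hk).ne').le.trans ?_
    refine (Polynomial.degree_add_le _ _).trans (max_le hdeg ?_)
    exact Polynomial.degree_C_le.trans (by exact_mod_cast Nat.zero_le n)
  · intro t ht
    obtain ⟨h1, h2⟩ := hR t ht
    simp only [Polynomial.eval_mul, Polynomial.eval_C, Polynomial.eval_add]
    rw [abs_mul, abs_of_pos (inv_pos.mpr hk), inv_mul_le_iff₀ hk, abs_le]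
    constructor <;> linarith

/-- Beigel's doubling step. Let `Q` have degree at most `D`, be positive at `z`, and be nonpositive
at every point obtained by raising a nonempty set of the more than `3 D²` bits in `B`. Then one of
these points has value at most `-2 Q(z)`. Otherwise, raising each bit of `B` independently with
probability `(1 - t) / 2` gives, in expectation, a polynomial in `t` of degree at most `D` with
values in `[-2 Q(z), Q(z)]` on `[-1, 1]` and derivative at least `|B| Q(z) / 2` at `t = 1`,
against Markov's inequality. -/
lemma doubling_step {I : Type*} [Fintype I] [DecidableEq I] (c : Finset I → ℝ) (D : ℕ)
    (hc : ∀ S, D < #S → c S = 0) (z : I → Bool) (B : Finset I) (hB : 3 * D ^ 2 < #B)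
    (hz : ∀ i ∈ B, z i = false) (hpos : 0 < ∑ S, c S * chi S z)
    (hneg : ∀ A ⊆ B, A.Nonempty → ∑ S, c S * chi S (raise z A) ≤ 0) :
    ∃ A ⊆ B, A.Nonempty ∧ ∑ S, c S * chi S (raise z A) ≤ -(2 * ∑ S, c S * chi S z) := by
  by_contra! hcon
  set M := ∑ S, c S * chi S z with hM
  have hraise0 : raise z ∅ = z := by
    funext i
    simp [raise]
  let R : Polynomial ℝ := ∑ S : Finset I, Polynomial.C (c S * chi S z) * Polynomial.X ^ #(B ∩ S)
  have hdeg : R.degree ≤ D := by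
    refine (Polynomial.degree_sum_le _ _).trans (Finset.sup_le fun S _ => ?_)
    by_cases hS : D < #S
    · simp [hc S hS]
    · refine (Polynomial.degree_C_mul_X_pow_le _ _).trans ?_
      have : #(B ∩ S) ≤ D := (Finset.card_le_card Finset.inter_subset_right).trans (not_lt.mp hS)
      exact_mod_cast this
  -- `R.eval t` as an average of values of `Q`
  have heval : ∀ t : ℝ, R.eval t = ∑ A ∈ B.powerset,
      ((∏ i ∈ A, (1 - t) / 2) * ∏ i ∈ B \ A, (1 + t) / 2) * ∑ S, c S * chi S (raise z A) := by
    intro t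
    simp only [R, Polynomial.eval_finsetSum, Polynomial.eval_mul, Polynomial.eval_C,
      Polynomial.eval_pow, Polynomial.eval_X, Finset.mul_sum]
    rw [Finset.sum_comm]
    refine Finset.sum_congr rfl fun S _ => ?_
    have h1 : t ^ #(B ∩ S) = ∏ i ∈ B, ((1 - t) / 2 * (if i ∈ S then (-1 : ℝ) else 1)
        + (1 + t) / 2) := by
      have : ∀ i ∈ B, ((1 - t) / 2 * (if i ∈ S then (-1 : ℝ) else 1) + (1 + t) / 2)
          = if i ∈ S then t else 1 := by
        intro i _
        split_ifs <;> ring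
      rw [Finset.prod_congr rfl this, Finset.prod_ite_mem, Finset.prod_const]
    rw [h1, Finset.prod_add, Finset.mul_sum]
    refine Finset.sum_congr rfl fun A hA => ?_
    rw [chi_raise z A S fun i hi => hz i (Finset.mem_powerset.mp hA hi), Finset.prod_mul_distrib]
    ring
  have hone : ∀ t : ℝ, ∑ A ∈ B.powerset,
      ((∏ i ∈ A, (1 - t) / 2) * ∏ i ∈ B \ A, (1 + t) / 2) = 1 := by
    intro t
    rw [← Finset.prod_add]
    refine Finset.prod_eq_one fun i _ => by ring
  have hval : ∀ A ∈ B.powerset, -(2 * M) ≤ ∑ S, c S * chi S (raise z A) ∧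
      ∑ S, c S * chi S (raise z A) ≤ M := by
    intro A hA
    rcases A.eq_empty_or_nonempty with rfl | hne
    · rw [hraise0]
      constructor <;> linarith
    · have h1 := hcon A (Finset.mem_powerset.mp hA) hne
      have h2 := hneg A (Finset.mem_powerset.mp hA) hne
      constructor <;> linarith
  have hbd : ∀ t ∈ Set.Icc (-1 : ℝ) 1, -(2 * M) ≤ R.eval t ∧ R.eval t ≤ M := by
    intro t ht
    have hw : ∀ A ∈ B.powerset, 0 ≤ (∏ i ∈ A, (1 - t) / 2) * ∏ i ∈ B \ A, (1 + t) / 2 := by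
      intro A _
      refine mul_nonneg (Finset.prod_nonneg fun _ _ => ?_) (Finset.prod_nonneg fun _ _ => ?_)
      · linarith [ht.2]
      · linarith [ht.1]
    rw [heval]
    constructor
    · have := Finset.sum_le_sum fun A hA => mul_le_mul_of_nonneg_left (hval A hA).1 (hw A hA)
      rwa [← Finset.sum_mul, hone, one_mul] at this
    · have := Finset.sum_le_sum fun A hA => mul_le_mul_of_nonneg_left (hval A hA).2 (hw A hA)
      rwa [← Finset.sum_mul, hone, one_mul] at this
  have hmarkov := derivative_eval_one_le R D M hpos hdeg hbd
  have hder : R.derivative.eval 1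
      = ∑ i ∈ B, (M - ∑ S, c S * chi S (raise z {i})) / 2 := by
    have h1 : R.derivative.eval 1 = ∑ S, c S * chi S z * #(B ∩ S) := by
      simp only [R, Polynomial.derivative_sum, Polynomial.eval_finsetSum,
        Polynomial.derivative_C_mul_X_pow]
      simp
    rw [h1]
    simp_rw [hM, ← Finset.sum_sub_distrib, Finset.sum_div]
    rw [Finset.sum_comm]
    refine Finset.sum_congr rfl fun S _ => ?_
    have h2 : (#(B ∩ S) : ℝ) = ∑ i ∈ B, if i ∈ S then (1 : ℝ) else 0 := by
      rw [Finset.sum_boole, Finset.filter_mem_eq_inter]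
    rw [h2, Finset.mul_sum]
    refine Finset.sum_congr rfl fun i hi => ?_
    rw [chi_raise z {i} S (by simpa using hz i hi)]
    simp only [Finset.prod_singleton]
    split_ifs <;> ring
  have hlow : (#B : ℝ) * (M / 2) ≤ R.derivative.eval 1 := by
    rw [hder, ← nsmul_eq_mul]
    refine Finset.card_nsmul_le_sum _ _ _ fun i hi => ?_
    have := hneg {i} (by simpa using hi) (by simp)
    linarith
  have hB' : (3 : ℝ) * (D : ℝ) ^ 2 < #B := by exact_mod_cast hB
  nlinarith

/-- Let `Q` have degree at most `D` and let `g` be the sign function that reads the highest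
nonzero block: `g = (-1)^(j+1)` when the highest nonzero block is block `j`, and `g = 1` at `0`.
If `Q` agrees in sign with `g` with margin `δ` then `|Q|` can be doubled with every block, so it reaches `2^L δ`; but it is at most
`∑ |c S| ≤ 1`. -/
lemma amplification {L m D : ℕ} (hm : 3 * D ^ 2 < m) (c : Finset (Fin L × Fin m) → ℝ)
    (hc : ∀ S, D < #S → c S = 0) (hc1 : ∑ S, |c S| ≤ 1) (g : (Fin L × Fin m → Bool) → ℝ)
    (hg0 : g (fun _ => false) = 1)
    (hg : ∀ z (i : Fin L × Fin m), z i = true → (∀ k, z k = true → k.1 ≤ i.1) →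
      g z = (-1) ^ ((i.1 : ℕ) + 1))
    (δ : ℝ) (hδ : 0 < δ) (hQ : ∀ z, δ ≤ g z * ∑ S, c S * chi S z) :
    2 ^ L * δ ≤ 1 := by
  have key : ∀ j ≤ L, ∃ z : Fin L × Fin m → Bool, (∀ i, z i = true → (i.1 : ℕ) < j) ∧
      g z = (-1) ^ j ∧ 2 ^ j * δ ≤ (-1) ^ j * ∑ S, c S * chi S z := by
    intro j
    induction j with
    | zero =>
      intro _
      refine ⟨fun _ => false, by simp, by simpa using hg0, ?_⟩
      have := hQ (fun _ => false)
      rw [hg0] at this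
      simpa using this
    | succ j ih =>
      intro hj
      obtain ⟨z, hz, hgz, hQz⟩ := ih (by omega)
      set b : Fin L := ⟨j, by omega⟩ with hb
      have hsum : ∀ y, ∑ S, ((-1) ^ j * c S) * chi S y = (-1) ^ j * ∑ S, c S * chi S y := by
        intro y
        rw [Finset.mul_sum]
        exact Finset.sum_congr rfl fun S _ => mul_assoc _ _ _
      have hzB : ∀ i ∈ ({b} ×ˢ univ : Finset (Fin L × Fin m)), z i = false := by
        intro i hi
        simp only [Finset.mem_product, Finset.mem_singleton, Finset.mem_univ, and_true] at hi
        by_contra h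
        have := hz i (by simpa using h)
        rw [hi] at this
        simp [hb] at this
      have hgr : ∀ A ⊆ ({b} ×ˢ univ : Finset (Fin L × Fin m)), A.Nonempty →
          (∀ i, raise z A i = true → (i.1 : ℕ) < j + 1) ∧ g (raise z A) = (-1) ^ (j + 1) := by
        intro A hA hne
        have hlt : ∀ i, raise z A i = true → (i.1 : ℕ) < j + 1 := by
          intro i hi
          simp only [raise, Bool.or_eq_true, decide_eq_true_eq] at hi
          rcases hi with hi | hi
          · have := hz i hi
            omega
          · have := hA hi
            simp only [Finset.mem_product, Finset.mem_singleton, Finset.mem_univ, and_true] at this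
            rw [this]
            simp [hb]
        refine ⟨hlt, ?_⟩
        obtain ⟨i, hi⟩ := hne
        have hib := hA hi
        simp only [Finset.mem_product, Finset.mem_singleton, Finset.mem_univ, and_true] at hib
        rw [hg (raise z A) i (by simp [raise, hi]), hib]
        intro k hk
        have := hlt k hk
        rw [hib, Fin.le_def]
        simp only [hb]
        omega
      obtain ⟨A, hA, hne, hval⟩ := doubling_step (fun S => (-1) ^ j * c S) D
        (fun S hS => by simp [hc S hS]) z ({b} ×ˢ univ)
        (by simpa using hm) hzB
        (by
          rw [hsum]
          exact lt_of_lt_of_le (by positivity) hQz)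
        (by
          intro A hA hne
          rw [hsum]
          have h1 := hQ (raise z A)
          rw [(hgr A hA hne).2, pow_succ] at h1
          linarith)
      refine ⟨raise z A, (hgr A hA hne).1, (hgr A hA hne).2, ?_⟩
      rw [hsum, hsum] at hval
      rw [pow_succ, pow_succ]
      linarith
  obtain ⟨z, -, -, hz⟩ := key L le_rfl
  refine hz.trans ((le_abs_self _).trans ?_)
  rw [abs_mul, abs_pow, abs_neg, abs_one, one_pow, one_mul]
  refine (Finset.abs_sum_le_sum_abs _ _).trans ?_
  simp_rw [abs_mul, abs_chi, mul_one]
  exact hc1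

/-! ### The decision lists -/

/-- The value of the decision list that tests the bits `z i` for `i` in the given list, outputs
`s i` at the first bit equal to `1`, and defaults to `1`. -/
def scan {I : Type*} (s : I → ℝ) : List I → (I → Bool) → ℝ
  | [], _ => 1
  | i :: l, z => if z i then s i else scan s l z

lemma dlEval_map {I : Type*} {d : ℕ} (lit : I → (Fin d → Bool) → Bool) (s : I → ℝ) (l : List I)
    (x : Fin d → Bool) :
    dlEval (l.map fun i => (lit i, s i)) 1 x = scan s l (fun i => lit i x) := by
  induction l with
  | nil => simp [dlEval, scan]
  | cons i l ih => simp [dlEval, scan, ih]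

lemma abs_scan {I : Type*} (s : I → ℝ) (hs : ∀ i, |s i| = 1) (l : List I) (z : I → Bool) :
    |scan s l z| = 1 := by
  induction l with
  | nil => simp [scan]
  | cons i l ih =>
    simp only [scan]
    split_ifs
    · exact hs i
    · exact ih

lemma scan_false {I : Type*} (s : I → ℝ) (l : List I) : scan s l (fun _ => false) = 1 := by
  induction l with
  | nil => simp [scan]
  | cons i l ih => simpa [scan] using ih

lemma scan_eq {I J : Type*} [LinearOrder J] (block : I → J) (s : J → ℝ) (l : List I)
    (hl : l.Pairwise fun a b => block b ≤ block a) (z : I → Bool) (i : I) (hi : i ∈ l)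
    (hzi : z i = true) (hmax : ∀ k, z k = true → block k ≤ block i) :
    scan (fun k => s (block k)) l z = s (block i) := by
  induction l with
  | nil => simp at hi
  | cons a l ih =>
    rw [List.pairwise_cons] at hl
    simp only [scan]
    split_ifs with ha
    · congr 1
      refine le_antisymm (hmax a ha) ?_
      rcases List.mem_cons.mp hi with rfl | h
      · exact le_rfl
      · exact hl.1 i h
    · refine ih hl.2 ?_
      rcases List.mem_cons.mp hi with rfl | h
      · exact absurd hzi ha
      · exact h

/-- All cells of the grid, with higher blocks (first coordinates) before lower ones. -/
def cells (L m : ℕ) : List (Fin L × Fin m) :=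
  (List.finRange L).reverse.flatMap fun j => (List.finRange m).map fun k => (j, k)

lemma mem_cells {L m : ℕ} (i : Fin L × Fin m) : i ∈ cells L m := by
  simp [cells, Prod.ext_iff]

lemma cells_pairwise (L m : ℕ) : (cells L m).Pairwise fun a b => b.1 ≤ a.1 := by
  unfold cells
  rw [List.pairwise_flatMap]
  constructor
  · intro j _
    rw [List.pairwise_map]
    exact List.pairwise_of_forall fun _ _ => le_rfl
  · rw [List.pairwise_reverse]
    refine (List.pairwise_lt_finRange L).imp ?_
    intro a b hab x hx y hy
    simp only [List.mem_map] at hx hy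
    obtain ⟨_, _, rfl⟩ := hx
    obtain ⟨_, _, rfl⟩ := hy
    exact hab.le

lemma isLiteral_xor {d : ℕ} (j : Fin d) (b : Bool) :
    IsLiteral (fun x : Fin d → Bool => xor (x j) b) := by
  refine ⟨j, ?_⟩
  cases b <;> simp

/-! ### The margin bounds -/

/-- The quantitative bound. Truncating the polynomial of `exists_decaying_poly` at level `D` costs
at most `√2 ^ (-D)`, and `amplification` applies to the truncation, with `D` blocks of `4 D²` bits;
the factor two in `8 D³` comes from the two cells per bit of the pattern matrix. -/
lemma margin_le {d N D : ℕ} (hD : 1 ≤ D) (hd : 8 * D ^ 3 ≤ d)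
    (Ψ : (Fin d → Bool) → EuclideanSpace ℝ (Fin N)) (γ : ℝ)
    (w : ((Fin d → Bool) → ℝ) → EuclideanSpace ℝ (Fin N)) (hΨ : ∀ x, ‖Ψ x‖ ≤ 1)
    (hw : ∀ f, IsDecisionList f → ‖w f‖ ≤ 1)
    (hγ : ∀ f, IsDecisionList f → ∀ x, γ ≤ f x * ⟪w f, Ψ x⟫) :
    γ ≤ 2 * (√2 ^ D)⁻¹ := by
  by_contra! hlt
  have hr1 : (1 : ℝ) ≤ √2 := by
    rw [Real.one_le_sqrt]
    norm_num
  have hr0 : (0 : ℝ) < √2 ^ D := by positivity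
  let I := Fin D × Fin (4 * D ^ 2)
  have hcard : Fintype.card (I × Bool) ≤ Fintype.card (Fin d) := by
    simp only [I, Fintype.card_prod, Fintype.card_fin, Fintype.card_bool]
    calc D * (4 * D ^ 2) * 2 = 8 * D ^ 3 := by ring
      _ ≤ d := hd
  obtain ⟨e⟩ := Function.Embedding.nonempty_of_card_le hcard
  let s : Fin D → ℝ := fun j => (-1) ^ ((j : ℕ) + 1)
  have hs : ∀ j, |s j| = 1 := fun j => by simp [s]
  let g : (I → Bool) → ℝ := scan (fun k => s k.1) (cells D (4 * D ^ 2))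
  let lit : (I → Bool) → (I → Bool) → I → (Fin d → Bool) → Bool :=
    fun V b i x => xor (x (e (i, V i))) (b i)
  let f : (I → Bool) → (I → Bool) → (Fin d → Bool) → ℝ := fun V b =>
    dlEval ((cells D (4 * D ^ 2)).map fun i => (lit V b i, s i.1)) 1
  have hf : ∀ V b, IsDecisionList (f V b) := by
    intro V b
    refine ⟨_, 1, ?_, Or.inl rfl, rfl⟩
    intro p hp
    obtain ⟨i, _, rfl⟩ := List.mem_map.mp hp
    exact ⟨isLiteral_xor _ _, neg_one_pow_eq_or ℝ _⟩
  obtain ⟨c, hc1, hcQ⟩ := exists_decaying_poly (fun V b => w (f V b))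
    (fun x : I × Bool → Bool => Ψ (Function.extend e x fun _ => false)) g γ
    (fun V b => hw _ (hf V b)) (fun x => hΨ _) (by
      intro V b x
      have h := hγ _ (hf V b) (Function.extend e x fun _ => false)
      have h2 : f V b (Function.extend e x fun _ => false)
          = g (fun i => xor (x (i, V i)) (b i)) := by
        simp only [f, g, dlEval_map, lit, e.injective.extend_apply]
      rwa [h2] at h)
  have hpow : ∀ S : Finset I, |c S| ≤ √2 ^ #S * |c S| := fun S =>
    le_mul_of_one_le_left (abs_nonneg _) (one_le_pow₀ hr1)
  let c' : Finset I → ℝ := fun S => if #S ≤ D then c S else 0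
  have htail : ∑ S, |c S - c' S| ≤ (√2 ^ D)⁻¹ := by
    rw [← one_div, le_div_iff₀ hr0, Finset.sum_mul]
    refine le_trans (Finset.sum_le_sum fun S _ => ?_) hc1
    simp only [c']
    split_ifs with h
    · simp only [sub_self, abs_zero, zero_mul]
      positivity
    · rw [sub_zero, mul_comm]
      gcongr
      omega
  have hγpos : 0 < γ := lt_trans (by positivity) hlt
  have hamp := amplification (L := D) (m := 4 * D ^ 2) (D := D) (by nlinarith) c'
    (fun S hS => by simp [c', not_le.mpr hS])
    (by
      refine le_trans (Finset.sum_le_sum fun S _ => ?_) hc1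
      refine le_trans ?_ (hpow S)
      simp only [c']
      split_ifs
      · exact le_rfl
      · simp)
    g (scan_false _ _)
    (fun z i hi hmax => scan_eq Prod.fst s _ (cells_pairwise _ _) z i (mem_cells i) hi hmax)
    (γ / 2) (by positivity)
    (by
      intro z
      have h1 := hcQ z
      have h2 : g z * ∑ S, c S * chi S z - g z * ∑ S, c' S * chi S z ≤ (√2 ^ D)⁻¹ := by
        rw [← mul_sub, ← Finset.sum_sub_distrib]
        refine (le_abs_self _).trans ?_
        have hgz : |g z| = 1 := abs_scan _ (fun k => hs k.1) _ z
        rw [abs_mul, hgz, one_mul]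
        refine (Finset.abs_sum_le_sum_abs _ _).trans (le_trans (le_of_eq ?_) htail)
        refine Finset.sum_congr rfl fun S _ => ?_
        rw [← sub_mul, abs_mul, abs_chi, mul_one]
      linarith)
  have h3 : (√2 ^ D)⁻¹ * √2 ^ D = 1 := inv_mul_cancel₀ hr0.ne'
  have h4 : (√2 : ℝ) ^ D ≤ 2 ^ D := by
    gcongr
    rw [Real.sqrt_le_left (by norm_num)]
    norm_num
  have h5 : γ / 2 * √2 ^ D ≤ 1 := by nlinarith
  nlinarith

/-- The constant `1` and a single literal already force `γ ≤ 1 / √2`, by the parallelogram law. -/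
lemma margin_le_base {d N : ℕ} (hd : 1 ≤ d)
    (Ψ : (Fin d → Bool) → EuclideanSpace ℝ (Fin N)) (γ : ℝ)
    (w : ((Fin d → Bool) → ℝ) → EuclideanSpace ℝ (Fin N)) (hΨ : ∀ x, ‖Ψ x‖ ≤ 1)
    (hw : ∀ f, IsDecisionList f → ‖w f‖ ≤ 1)
    (hγ : ∀ f, IsDecisionList f → ∀ x, γ ≤ f x * ⟪w f, Ψ x⟫) :
    γ ≤ (2 : ℝ) ^ (-(1 / 2) : ℝ) := by
  set f₁ : (Fin d → Bool) → ℝ := dlEval [] 1 with hf₁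
  set f₂ : (Fin d → Bool) → ℝ := dlEval [(fun x => x ⟨0, hd⟩, -1)] 1 with hf₂
  have h₁ : IsDecisionList f₁ := ⟨[], 1, by simp, Or.inl rfl, rfl⟩
  have h₂ : IsDecisionList f₂ :=
    ⟨[(fun x => x ⟨0, hd⟩, -1)], 1, by simpa using ⟨_, Or.inl rfl⟩, Or.inl rfl, rfl⟩
  set a := Ψ fun _ => false
  set b := Ψ fun _ => true
  have e1 := hγ f₁ h₁ fun _ => false
  have e2 := hγ f₁ h₁ fun _ => true
  have e3 := hγ f₂ h₂ fun _ => false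
  have e4 := hγ f₂ h₂ fun _ => true
  have v1 : ∀ x, f₁ x = 1 := fun x => by simp [hf₁, dlEval]
  have v2 : f₂ (fun _ => false) = 1 := by simp [hf₂, dlEval]
  have v3 : f₂ (fun _ => true) = -1 := by simp [hf₂, dlEval]
  rw [v1, one_mul] at e1 e2
  rw [v2, one_mul] at e3
  rw [v3, neg_one_mul] at e4
  have k1 : 2 * γ ≤ ‖a + b‖ := by
    have := (real_inner_le_norm (w f₁) (a + b)).trans
      (mul_le_of_le_one_left (norm_nonneg _) (hw f₁ h₁))
    rw [inner_add_right] at this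
    linarith
  have k2 : 2 * γ ≤ ‖a - b‖ := by
    have := (real_inner_le_norm (w f₂) (a - b)).trans
      (mul_le_of_le_one_left (norm_nonneg _) (hw f₂ h₂))
    rw [inner_sub_right] at this
    linarith
  have hp := parallelogram_law_with_norm ℝ a b
  have ha : ‖a‖ ≤ 1 := hΨ _
  have hb : ‖b‖ ≤ 1 := hΨ _
  have hsq : ((2 : ℝ) ^ (-(1 / 2) : ℝ)) ^ 2 = 1 / 2 := by
    rw [← Real.rpow_natCast, ← Real.rpow_mul (by norm_num)]
    norm_num
  rcases le_or_gt γ 0 with h0 | h0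
  · exact h0.trans (by positivity)
  · refine le_of_sq_le_sq ?_ (by positivity)
    rw [hsq]
    nlinarith [norm_nonneg a, norm_nonneg b]

theorem stmt4 :
    ∃ c : ℝ, 0 < c ∧
      ∀ d : ℕ, 1 ≤ d →
        ∀ (N : ℕ) (Ψ : (Fin d → Bool) → EuclideanSpace ℝ (Fin N)) (γ : ℝ)
          (w : ((Fin d → Bool) → ℝ) → EuclideanSpace ℝ (Fin N)),
          (∀ x, ‖Ψ x‖ ≤ 1) →
          (∀ f, IsDecisionList f → ‖w f‖ ≤ 1) →
          (∀ f, IsDecisionList f → ∀ x, γ ≤ f x * ⟪w f, Ψ x⟫) →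
          γ ≤ (2 : ℝ) ^ (-(c * (d : ℝ) ^ ((1 : ℝ) / 3))) := by
  refine ⟨1 / 20, by norm_num, ?_⟩
  intro d hd N Ψ γ w hΨ hw hγ
  have hroot : ∀ k : ℕ, d ≤ 8 * (k + 1) ^ 3 → (d : ℝ) ^ ((1 : ℝ) / 3) ≤ 2 * (k + 1) := by
    intro k hk
    have h1 : (d : ℝ) ≤ (2 * (k + 1)) ^ (3 : ℕ) := by
      have : (d : ℝ) ≤ 8 * (k + 1) ^ 3 := by exact_mod_cast hk
      linarith [this, mul_pow (2 : ℝ) (k + 1) 3]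
    calc (d : ℝ) ^ ((1 : ℝ) / 3) ≤ ((2 * ((k : ℝ) + 1)) ^ (3 : ℕ)) ^ ((1 : ℝ) / 3) := by gcongr
      _ = 2 * (k + 1) := by
        rw [← Real.rpow_natCast, ← Real.rpow_mul (by positivity)]
        norm_num
  by_cases hsmall : d < 512
  · refine (margin_le_base hd Ψ γ w hΨ hw hγ).trans ?_
    have := hroot 3 (by omega)
    refine Real.rpow_le_rpow_of_exponent_le (by norm_num) ?_
    norm_num at this ⊢
    linarith
  · -- `D = ⌊d^(1/3) / 2⌋`
    set D := Nat.findGreatest (fun k => 8 * k ^ 3 ≤ d) d with hDdef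
    have hD4 : 4 ≤ D := Nat.le_findGreatest (by omega) (by omega)
    have hDle : 8 * D ^ 3 ≤ d :=
      Nat.findGreatest_spec (P := fun k => 8 * k ^ 3 ≤ d) (m := 0) (by omega) (by simp)
    have hDlt : d ≤ 8 * (D + 1) ^ 3 := by
      by_contra! h
      have h1 : D + 1 ≤ d := by nlinarith [Nat.le_self_pow (n := 3) (by norm_num) (D + 1)]
      have := Nat.le_findGreatest (P := fun k => 8 * k ^ 3 ≤ d) h1 h.le
      omega
    have h1 := margin_le (by omega) hDle Ψ γ w hΨ hw hγ
    have h2 : 2 * (√2 ^ D)⁻¹ = (2 : ℝ) ^ (1 - (D : ℝ) / 2) := by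
      rw [Real.rpow_sub (by norm_num), Real.rpow_one, Real.sqrt_eq_rpow, ← Real.rpow_natCast,
        ← Real.rpow_mul (by norm_num), div_eq_mul_inv]
      congr 3
      ring
    rw [h2] at h1
    refine h1.trans (Real.rpow_le_rpow_of_exponent_le (by norm_num) ?_)
    have h3 := hroot D hDlt
    have h4 : (4 : ℝ) ≤ D := by exact_mod_cast hD4
    linarith
end

section
/- Let P be a probability measure on ℝ^d × {−1,1} such that ‖x‖₂ ≤ 1 for P-almost every (x,ℓ), let γ > 0, and suppose there is w* ∈ ℝ^d with ‖w*‖₂ ≤ 1 such that ℓ·⟨w*, x⟩ ≥ γ for P-almost every (x,ℓ). Let α, β ∈ (0,1) and let w ∈ ℝ^d be a unit vector with F(w) ≤ α·β, where F is the hinge-type objective associated with P and γ. Then P[ (x,ℓ) : ℓ·⟨w, x⟩ ≥ −β/2 + γ²/√d ] ≥ 1 − α. -/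
/-!
Markov's inequality applied to the nonnegative integrand `hingeTerm γ w` of `hingeF` shows that
`hingeTerm γ w p < β` outside an event of probability at most `α`. For such a `p = (x, ℓ)`, the
margin condition and Cauchy–Schwarz give `γ ≤ ‖x‖`, so some coordinate has `γ / √d ≤ |x i|`.
Among the summands with that index `i`, the sign for which the shift `± γ x i` opposes the label
contributes at least `2 (γ |x i| - ℓ ⟪w, x⟫)`, hence `ℓ ⟪w, x⟫ > -β / 2 + γ ^ 2 / √d`
(`margin_of_hingeTerm_lt`).
-/

open MeasureTheory RealInnerProductSpace
open scoped BigOperators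

/-- The hinge-type objective `F` associated with a distribution `P` on `ℝ^d × {−1,1}`
and margin parameter `γ`. -/
noncomputable def hingeF {d : ℕ} (P : Measure (EuclideanSpace ℝ (Fin d) × ℝ)) (γ : ℝ)
    (w : EuclideanSpace ℝ (Fin d)) : ℝ :=
  ∫ p, (∑ i : Fin d,
      (|⟪w + γ • EuclideanSpace.single i (1 : ℝ), p.1⟫|
        - p.2 * ⟪w + γ • EuclideanSpace.single i (1 : ℝ), p.1⟫
        + |⟪w - γ • EuclideanSpace.single i (1 : ℝ), p.1⟫|
        - p.2 * ⟪w - γ • EuclideanSpace.single i (1 : ℝ), p.1⟫)) ∂P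

/-- The integrand of `hingeF`. -/
noncomputable def hingeTerm {d : ℕ} (γ : ℝ) (w : EuclideanSpace ℝ (Fin d))
    (p : EuclideanSpace ℝ (Fin d) × ℝ) : ℝ :=
  ∑ i : Fin d,
      (|⟪w + γ • EuclideanSpace.single i (1 : ℝ), p.1⟫|
        - p.2 * ⟪w + γ • EuclideanSpace.single i (1 : ℝ), p.1⟫
        + |⟪w - γ • EuclideanSpace.single i (1 : ℝ), p.1⟫|
        - p.2 * ⟪w - γ • EuclideanSpace.single i (1 : ℝ), p.1⟫)

lemma mul_le_abs_of_label {l u : ℝ} (hl : l = 1 ∨ l = -1) : l * u ≤ |u| := by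
  rcases hl with rfl | rfl
  · simpa using le_abs_self u
  · simpa using neg_le_abs u

lemma exists_large_coord {d : ℕ} (hd : 0 < d) {γ : ℝ} (hγ : 0 < γ)
    (x : EuclideanSpace ℝ (Fin d)) (hx : γ ≤ ‖x‖) : ∃ i, γ / Real.sqrt d ≤ |x i| := by
  by_contra! h
  have hd' : (0 : ℝ) < d := by exact_mod_cast hd
  have h1 : ∀ i ∈ Finset.univ, x i ^ 2 < γ ^ 2 / d := by
    intro i _
    have h2 : |x i| ^ 2 < (γ / Real.sqrt d) ^ 2 := pow_lt_pow_left₀ (h i) (abs_nonneg _) two_ne_zero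
    rwa [sq_abs, div_pow, Real.sq_sqrt hd'.le] at h2
  have h3 : ∑ i, x i ^ 2 < ∑ _i : Fin d, γ ^ 2 / d :=
    Finset.sum_lt_sum_of_nonempty ⟨⟨0, hd⟩, Finset.mem_univ _⟩ h1
  have h4 : ∑ _i : Fin d, γ ^ 2 / (d : ℝ) = γ ^ 2 := by
    simp
    field_simp
  rw [h4, ← EuclideanSpace.real_norm_sq_eq] at h3
  nlinarith

lemma margin_of_hingeTerm_lt {d : ℕ} (hd : 0 < d) {γ β : ℝ} (hγ : 0 < γ)
    {wstar w : EuclideanSpace ℝ (Fin d)} (hwstar : ‖wstar‖ ≤ 1)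
    {p : EuclideanSpace ℝ (Fin d) × ℝ} (hl : p.2 = 1 ∨ p.2 = -1)
    (hm : γ ≤ p.2 * ⟪wstar, p.1⟫) (hG : hingeTerm γ w p < β) :
    -β / 2 + γ ^ 2 / Real.sqrt d ≤ p.2 * ⟪w, p.1⟫ := by
  have hx : γ ≤ ‖p.1‖ := by
    have h1 := mul_le_abs_of_label (u := ⟪wstar, p.1⟫) hl
    have h2 := abs_real_inner_le_norm wstar p.1
    nlinarith [norm_nonneg p.1]
  obtain ⟨i, hi⟩ := exists_large_coord hd hγ p.1 hx
  have hterm := Finset.single_le_sum (f := fun i : Fin d =>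
      (|⟪w + γ • EuclideanSpace.single i (1 : ℝ), p.1⟫|
        - p.2 * ⟪w + γ • EuclideanSpace.single i (1 : ℝ), p.1⟫
        + |⟪w - γ • EuclideanSpace.single i (1 : ℝ), p.1⟫|
        - p.2 * ⟪w - γ • EuclideanSpace.single i (1 : ℝ), p.1⟫))
      (fun j _ => by
        have h1 := mul_le_abs_of_label (u := ⟪w + γ • EuclideanSpace.single j (1 : ℝ), p.1⟫) hl
        have h2 := mul_le_abs_of_label (u := ⟪w - γ • EuclideanSpace.single j (1 : ℝ), p.1⟫) hl
        linarith) (Finset.mem_univ i)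
  change _ ≤ hingeTerm γ w p at hterm
  have hplus : ⟪w + γ • EuclideanSpace.single i (1 : ℝ), p.1⟫ = ⟪w, p.1⟫ + γ * p.1 i := by
    simp [inner_add_left, real_inner_smul_left, EuclideanSpace.inner_single_left]
  have hminus : ⟪w - γ • EuclideanSpace.single i (1 : ℝ), p.1⟫ = ⟪w, p.1⟫ - γ * p.1 i := by
    simp [inner_sub_left, real_inner_smul_left, EuclideanSpace.inner_single_left]
  simp only [hplus, hminus] at hterm
  have hγi : γ ^ 2 / Real.sqrt d ≤ γ * |p.1 i| := by
    have := mul_le_mul_of_nonneg_left hi hγ.le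
    calc γ ^ 2 / Real.sqrt d = γ * (γ / Real.sqrt d) := by ring
      _ ≤ _ := this
  generalize ⟪w, p.1⟫ = a at *
  generalize p.1 i = b at *
  have h1 := le_abs_self (a + γ * b)
  have h2 := neg_le_abs (a + γ * b)
  have h3 := le_abs_self (a - γ * b)
  have h4 := neg_le_abs (a - γ * b)
  rcases hl with hl | hl <;> rw [hl] at hterm ⊢ <;> rcases abs_cases b with ⟨hb, _⟩ | ⟨hb, _⟩ <;>
    rw [hb] at hγi <;> linarith

lemma integrable_hingeTerm {d : ℕ} (P : Measure (EuclideanSpace ℝ (Fin d) × ℝ))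
    [IsProbabilityMeasure P] (hP : ∀ᵐ p ∂P, ‖p.1‖ ≤ 1 ∧ (p.2 = 1 ∨ p.2 = -1))
    (γ : ℝ) (w : EuclideanSpace ℝ (Fin d)) : Integrable (hingeTerm γ w) P := by
  have hin : ∀ v : EuclideanSpace ℝ (Fin d), Integrable (fun p => ⟪v, p.1⟫) P := by
    intro v
    refine Integrable.of_bound (C := ‖v‖) (by fun_prop) ?_
    filter_upwards [hP] with p hp
    refine (norm_inner_le_norm v p.1).trans ?_
    nlinarith [norm_nonneg v, hp.1]
  have hlin : ∀ v : EuclideanSpace ℝ (Fin d), Integrable (fun p => p.2 * ⟪v, p.1⟫) P := by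
    intro v
    refine (hin v).mono (by fun_prop) ?_
    filter_upwards [hP] with p hp
    rcases hp.2 with h | h <;> simp [h]
  exact integrable_finsetSum _ fun i _ =>
    (((hin _).abs.sub (hlin _)).add (hin _).abs).sub (hlin _)

theorem stmt6 {d : ℕ}
    (P : Measure (EuclideanSpace ℝ (Fin d) × ℝ)) [IsProbabilityMeasure P]
    (hP : ∀ᵐ p ∂P, ‖p.1‖ ≤ 1 ∧ (p.2 = 1 ∨ p.2 = -1))
    (γ : ℝ) (hγ : 0 < γ)
    (wstar : EuclideanSpace ℝ (Fin d)) (hwstar : ‖wstar‖ ≤ 1)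
    (hmargin : ∀ᵐ p ∂P, γ ≤ p.2 * ⟪wstar, p.1⟫)
    (α β : ℝ) (hα : α ∈ Set.Ioo (0 : ℝ) 1) (hβ : β ∈ Set.Ioo (0 : ℝ) 1)
    (w : EuclideanSpace ℝ (Fin d)) (hw : ‖w‖ = 1)
    (hFw : hingeF P γ w ≤ α * β) :
    1 - α ≤ (P {p | -β / 2 + γ ^ 2 / Real.sqrt d ≤ p.2 * ⟪w, p.1⟫}).toReal := by
  have hd : 0 < d := by
    rcases Nat.eq_zero_or_pos d with rfl | h
    · simp [Subsingleton.elim w 0] at hw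
    · exact h
  have hnn : 0 ≤ᵐ[P] hingeTerm γ w := by
    filter_upwards [hP] with p hp
    refine Finset.sum_nonneg fun j _ => ?_
    have h1 := mul_le_abs_of_label (u := ⟪w + γ • EuclideanSpace.single j (1 : ℝ), p.1⟫) hp.2
    have h2 := mul_le_abs_of_label (u := ⟪w - γ • EuclideanSpace.single j (1 : ℝ), p.1⟫) hp.2
    linarith
  have hmarkov := mul_meas_ge_le_integral_of_nonneg hnn (integrable_hingeTerm P hP γ w) β
  have hbad : P.real {p | β ≤ hingeTerm γ w p} ≤ α := by
    have h1 : β * P.real {p | β ≤ hingeTerm γ w p} ≤ β * α := by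
      rw [mul_comm β α]
      exact hmarkov.trans hFw
    exact le_of_mul_le_mul_left h1 hβ.1
  set A := {p : EuclideanSpace ℝ (Fin d) × ℝ |
    -β / 2 + γ ^ 2 / Real.sqrt d ≤ p.2 * ⟪w, p.1⟫} with hA
  have hcover : P.real (A ∪ {p | β ≤ hingeTerm γ w p}) = 1 := by
    have : ∀ᵐ p ∂P, p ∈ A ∪ {p | β ≤ hingeTerm γ w p} := by
      filter_upwards [hP, hmargin] with p hp hm
      by_cases h : β ≤ hingeTerm γ w p
      · exact Or.inr h
      · exact Or.inl (margin_of_hingeTerm_lt hd hγ hwstar hp.2 hm (not_le.mp h))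
    have huniv : P (A ∪ {p | β ≤ hingeTerm γ w p}) = P Set.univ :=
      measure_congr (Filter.eventuallyEq_univ.mpr this)
    rw [measureReal_def, huniv]
    simp
  have hunion := measureReal_union_le (μ := P) A {p | β ≤ hingeTerm γ w p}
  change 1 - α ≤ P.real A
  linarith
end

section
/- Let P be a probability measure on ℝ^d × {−1,1} such that ‖x‖₂ ≤ 1 for P-almost every (x,ℓ), let γ > 0, and suppose there is w* ∈ ℝ^d with ‖w*‖₂ ≤ 1 such that ℓ·⟨w*, x⟩ ≥ γ for P-almost every (x,ℓ). Let α, β ∈ (0,1) with β < 2γ²/√d, and let w ∈ ℝ^d be a unit vector with F(w) ≤ α·β, where F is the hinge-type objective associated with P and γ. Then P[ (x,ℓ) : ℓ·⟨w, x⟩ > 0 ] ≥ 1 − α. -/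
/-! The integrand of `hingeF` is nonnegative, and on a misclassified point (`ℓ⟨w, x⟩ ≤ 0`) it is at
least `2γ‖x‖₁` (`hingeIntegrand_ge`). The margin condition gives `‖x‖₁ ≥ ⟨w*, ℓx⟩ ≥ γ`, because every
coordinate of `w*` is at most `1` in absolute value (`margin_le_sum_abs`). Hence the integrand is at
least `2γ² ≥ β` on misclassified points, and Markov's inequality bounds their probability by
`αβ / β = α`. -/

open MeasureTheory RealInnerProductSpace
open scoped BigOperators

/-- The integrand of `hingeF`. -/
noncomputable def hingeIntegrand {d : ℕ} (γ : ℝ) (w : EuclideanSpace ℝ (Fin d))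
    (p : EuclideanSpace ℝ (Fin d) × ℝ) : ℝ :=
  ∑ i : Fin d,
      (|⟪w + γ • EuclideanSpace.single i (1 : ℝ), p.1⟫|
        - p.2 * ⟪w + γ • EuclideanSpace.single i (1 : ℝ), p.1⟫
        + |⟪w - γ • EuclideanSpace.single i (1 : ℝ), p.1⟫|
        - p.2 * ⟪w - γ • EuclideanSpace.single i (1 : ℝ), p.1⟫)

lemma label_mul_le_abs {l : ℝ} (hl : l = 1 ∨ l = -1) (a : ℝ) : l * a ≤ |a| := by
  rcases hl with rfl | rfl
  · simpa using le_abs_self a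
  · simpa using neg_le_abs a

lemma hingeIntegrand_nonneg {d : ℕ} (γ : ℝ) (w : EuclideanSpace ℝ (Fin d))
    (p : EuclideanSpace ℝ (Fin d) × ℝ) (hl : p.2 = 1 ∨ p.2 = -1) :
    0 ≤ hingeIntegrand γ w p := by
  refine Finset.sum_nonneg fun i _ => ?_
  have h1 := label_mul_le_abs hl ⟪w + γ • EuclideanSpace.single i (1 : ℝ), p.1⟫
  have h2 := label_mul_le_abs hl ⟪w - γ • EuclideanSpace.single i (1 : ℝ), p.1⟫
  linarith

/-- On a misclassified point the linear parts of the two hinges at `w ± γeᵢ` add up to a nonnegative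
contribution, and the absolute values contribute at least `2γ|xᵢ|` by the triangle inequality. -/
lemma hingeIntegrand_ge {d : ℕ} {γ : ℝ} (hγ : 0 < γ) (w : EuclideanSpace ℝ (Fin d))
    (p : EuclideanSpace ℝ (Fin d) × ℝ) (hbad : p.2 * ⟪w, p.1⟫ ≤ 0) :
    2 * γ * ∑ i, |p.1 i| ≤ hingeIntegrand γ w p := by
  rw [Finset.mul_sum]
  refine Finset.sum_le_sum fun i _ => ?_
  have hs : ⟪EuclideanSpace.single i (1 : ℝ), p.1⟫ = p.1 i := by
    simp [EuclideanSpace.inner_single_left]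
  rw [inner_add_left, inner_sub_left, real_inner_smul_left, hs]
  have h := abs_sub (⟪w, p.1⟫ + γ * p.1 i) (⟪w, p.1⟫ - γ * p.1 i)
  have e : ⟪w, p.1⟫ + γ * p.1 i - (⟪w, p.1⟫ - γ * p.1 i) = 2 * γ * p.1 i := by ring
  rw [e, abs_mul, abs_of_pos (by positivity : 0 < 2 * γ)] at h
  linarith

lemma margin_le_sum_abs {d : ℕ} {γ : ℝ} {v : EuclideanSpace ℝ (Fin d)} (hv : ‖v‖ ≤ 1)
    (p : EuclideanSpace ℝ (Fin d) × ℝ) (hl : p.2 = 1 ∨ p.2 = -1)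
    (hm : γ ≤ p.2 * ⟪v, p.1⟫) : γ ≤ ∑ i, |p.1 i| := by
  refine hm.trans ((label_mul_le_abs hl _).trans ?_)
  rw [PiLp.inner_apply]
  refine (Finset.abs_sum_le_sum_abs _ _).trans (Finset.sum_le_sum fun i _ => ?_)
  have h1 : |v i| ≤ 1 := (PiLp.norm_apply_le v i).trans hv
  have h2 : ⟪v i, p.1 i⟫ = p.1 i * v i := by simp
  rw [h2, abs_mul]
  exact mul_le_of_le_one_right (abs_nonneg _) h1

lemma hingeIntegrand_integrable {d : ℕ}
    (P : Measure (EuclideanSpace ℝ (Fin d) × ℝ)) [IsProbabilityMeasure P]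
    (hP : ∀ᵐ p ∂P, ‖p.1‖ ≤ 1 ∧ (p.2 = 1 ∨ p.2 = -1))
    (γ : ℝ) (w : EuclideanSpace ℝ (Fin d)) : Integrable (hingeIntegrand γ w) P := by
  have key : ∀ u : EuclideanSpace ℝ (Fin d),
      Integrable (fun p : EuclideanSpace ℝ (Fin d) × ℝ => ⟪u, p.1⟫) P ∧
      Integrable (fun p : EuclideanSpace ℝ (Fin d) × ℝ => p.2 * ⟪u, p.1⟫) P := by
    intro u
    have hb : ∀ x : EuclideanSpace ℝ (Fin d), ‖x‖ ≤ 1 → ‖⟪u, x⟫‖ ≤ ‖u‖ := fun x hx =>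
      (norm_inner_le_norm u x).trans (mul_le_of_le_one_right (norm_nonneg _) hx)
    constructor
    · refine Integrable.of_bound (C := ‖u‖) (by fun_prop) ?_
      filter_upwards [hP] with p hp using hb _ hp.1
    · refine Integrable.of_bound (C := ‖u‖) (by fun_prop) ?_
      filter_upwards [hP] with p hp
      rcases hp.2 with h | h <;> simpa [h] using hb _ hp.1
  unfold hingeIntegrand
  exact integrable_finsetSum _ fun i _ =>
    (((key _).1.abs.sub (key _).2).add (key _).1.abs).sub (key _).2

theorem stmt7 {d : ℕ}
    (P : Measure (EuclideanSpace ℝ (Fin d) × ℝ)) [IsProbabilityMeasure P]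
    (hP : ∀ᵐ p ∂P, ‖p.1‖ ≤ 1 ∧ (p.2 = 1 ∨ p.2 = -1))
    (γ : ℝ) (hγ : 0 < γ)
    (wstar : EuclideanSpace ℝ (Fin d)) (hwstar : ‖wstar‖ ≤ 1)
    (hmargin : ∀ᵐ p ∂P, γ ≤ p.2 * ⟪wstar, p.1⟫)
    (α β : ℝ) (hα : α ∈ Set.Ioo (0 : ℝ) 1) (hβ : β ∈ Set.Ioo (0 : ℝ) 1)
    (hβsmall : β < 2 * γ ^ 2 / Real.sqrt d)
    (w : EuclideanSpace ℝ (Fin d)) (hw : ‖w‖ = 1)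
    (hFw : hingeF P γ w ≤ α * β) :
    1 - α ≤ (P {p | 0 < p.2 * ⟪w, p.1⟫}).toReal := by
  have hβ0 : 0 < β := hβ.1
  have hβ2 : β ≤ 2 * γ ^ 2 := by
    refine hβsmall.le.trans ?_
    rcases Nat.eq_zero_or_pos d with rfl | hd
    · simp; positivity
    · refine div_le_self (by positivity) ?_
      rw [Real.one_le_sqrt]
      exact_mod_cast hd
  have hmarkov := mul_meas_ge_le_integral_of_nonneg (μ := P) (f := hingeIntegrand γ w)
    (by filter_upwards [hP] with p hp using hingeIntegrand_nonneg γ w p hp.2)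
    (hingeIntegrand_integrable P hP γ w) β
  have hF : β * P.real {p | β ≤ hingeIntegrand γ w p} ≤ β * α := by
    rw [mul_comm β α]
    exact hmarkov.trans hFw
  have hmeas : MeasurableSet {p : EuclideanSpace ℝ (Fin d) × ℝ | 0 < p.2 * ⟪w, p.1⟫} :=
    measurableSet_lt (by fun_prop) (by fun_prop)
  have hbad : P.real {p | 0 < p.2 * ⟪w, p.1⟫}ᶜ ≤ P.real {p | β ≤ hingeIntegrand γ w p} := by
    refine ENNReal.toReal_mono (measure_ne_top _ _) (measure_mono_ae ?_)
    filter_upwards [hP, hmargin] with p hp hm hpb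
    have hb : p.2 * ⟪w, p.1⟫ ≤ 0 := not_lt.mp hpb
    have h1 := hingeIntegrand_ge hγ w p hb
    have h2 := margin_le_sum_abs hwstar p hp.2 hm
    change β ≤ hingeIntegrand γ w p
    nlinarith
  rw [probReal_compl_eq_one_sub hmeas] at hbad
  have := le_of_mul_le_mul_left hF hβ0
  change 1 - α ≤ P.real _
  linarith
end

section
/- Let d ≥ 1, γ > 0, β > 0, let w, x ∈ ℝ^d with ‖x‖₂ ≥ γ, and let ℓ ∈ {−1,1}. Suppose that for every i ∈ {1,…,d}: |⟨w+γe_i, x⟩| − ℓ·⟨w+γe_i, x⟩ ≤ β and |⟨w−γe_i, x⟩| − ℓ·⟨w−γe_i, x⟩ ≤ β, where (e₁,…,e_d) is the standard basis of ℝ^d. Then ℓ·⟨w, x⟩ ≥ −β/2 + γ²/√d. -/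
/-!
Each hinge bound `|a| - ℓ * a ≤ β` gives `ℓ * a ≥ -β / 2`, because `|a| ≥ -(ℓ * a)`. Applied to
`a = ⟪w, x⟫ ± γ * x i`, the two bounds at a coordinate `i` together yield
`ℓ * ⟪w, x⟫ ≥ -β / 2 + γ * |x i|`. Some coordinate satisfies `|x i| ≥ ‖x‖ / √d ≥ γ / √d`
(`exists_abs_coord_ge`), which is the claim.
-/

open RealInnerProductSpace
open scoped BigOperators

/-- A vector of Euclidean norm at least `γ` has a coordinate of size at least `γ / √d`, since otherwise
the `d` squared coordinates would sum to less than `γ ^ 2`. -/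
theorem exists_abs_coord_ge {d : ℕ} (hd : 1 ≤ d) {γ : ℝ} (hγ : 0 < γ)
    (x : EuclideanSpace ℝ (Fin d)) (hx : γ ≤ ‖x‖) : ∃ i, γ / Real.sqrt d ≤ |x i| := by
  have hd0 : (0 : ℝ) < d := by exact_mod_cast hd
  have : Nonempty (Fin d) := ⟨⟨0, hd⟩⟩
  by_contra! h
  have hsq : ∀ i, x i ^ 2 < γ ^ 2 / d := fun i => by
    have h1 := pow_lt_pow_left₀ (h i) (abs_nonneg _) two_ne_zero
    rwa [sq_abs, div_pow, Real.sq_sqrt hd0.le] at h1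
  have hlt : ∑ i, x i ^ 2 < ∑ _i : Fin d, γ ^ 2 / (d : ℝ) :=
    Finset.sum_lt_sum_of_nonempty Finset.univ_nonempty fun i _ => hsq i
  rw [← EuclideanSpace.real_norm_sq_eq, Finset.sum_const, Finset.card_univ, Fintype.card_fin,
    nsmul_eq_mul, mul_div_cancel₀ _ hd0.ne'] at hlt
  exact absurd hlt (not_lt.mpr (pow_le_pow_left₀ hγ.le hx 2))

theorem stmt8 {d : ℕ} (hd : 1 ≤ d) (γ β : ℝ) (hγ : 0 < γ) (hβ : 0 < β)
    (w x : EuclideanSpace ℝ (Fin d)) (hx : γ ≤ ‖x‖)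
    (ℓ : ℝ) (hℓ : ℓ = 1 ∨ ℓ = -1)
    (hplus : ∀ i : Fin d,
      |⟪w + γ • EuclideanSpace.single i (1 : ℝ), x⟫|
        - ℓ * ⟪w + γ • EuclideanSpace.single i (1 : ℝ), x⟫ ≤ β)
    (hminus : ∀ i : Fin d,
      |⟪w - γ • EuclideanSpace.single i (1 : ℝ), x⟫|
        - ℓ * ⟪w - γ • EuclideanSpace.single i (1 : ℝ), x⟫ ≤ β) :
    -β / 2 + γ ^ 2 / Real.sqrt d ≤ ℓ * ⟪w, x⟫ := by
  obtain ⟨i, hi⟩ := exists_abs_coord_ge hd hγ x hx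
  have hp := hplus i
  have hm := hminus i
  have hinner : ⟪EuclideanSpace.single i (1 : ℝ), x⟫ = x i := by
    simp [EuclideanSpace.inner_single_left]
  rw [inner_add_left, real_inner_smul_left, hinner] at hp
  rw [inner_sub_left, real_inner_smul_left, hinner] at hm
  have hγi : γ ^ 2 / Real.sqrt d ≤ γ * |x i| := by
    calc γ ^ 2 / Real.sqrt d = γ * (γ / Real.sqrt d) := by ring
      _ ≤ γ * |x i| := mul_le_mul_of_nonneg_left hi hγ.le
  have hp1 := le_abs_self (⟪w, x⟫ + γ * x i)
  have hp2 := neg_le_abs (⟪w, x⟫ + γ * x i)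
  have hm1 := le_abs_self (⟪w, x⟫ - γ * x i)
  have hm2 := neg_le_abs (⟪w, x⟫ - γ * x i)
  rcases hℓ with rfl | rfl <;> rcases abs_cases (x i) with ⟨h, -⟩ | ⟨h, -⟩ <;>
    rw [h] at hγi <;> linarith
end

section
/- There is a universal constant c > 0 with the following property. For every d ≥ 1 and every γ, δ ∈ (0,1), setting d' = ⌈c·log(1/δ)/γ²⌉, there exists a probability measure Ψ over (measurable) maps ψ: ℝ^d → ℝ^{d'} with ‖ψ(x)‖₂ ≤ 1 whenever ‖x‖₂ ≤ 1, such that: for every probability distribution D supported on the unit ball of ℝ^d, every function f: ℝ^d → {−1,1}, and every w ∈ ℝ^d with ‖w‖₂ ≤ 1 satisfying Pr_{x∼D}[ f(x)·⟨w, x⟩ ≥ γ ] = 1, with probability at least 1 − δ over ψ ∼ Ψ there exists w' ∈ ℝ^{d'} with ‖w'‖₂ ≤ 1 such that Pr_{x∼D}[ f(x)·⟨w', ψ(x)⟩ ≥ γ/2 ] ≥ 1 − δ. -/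
open MeasureTheory RealInnerProductSpace
open scoped BigOperators ENNReal

/-!
For `δ ≥ 1/2` a constant unit map suffices: one of the two labels carries at least half of the
mass, and `w'` is plus or minus the constant vector. (The target dimension is positive because
`log (1/δ) > 0`.)

For `δ < 1/2` the map consists of sine features. With independent standard Gaussian vectors
`g₁, …, g_k` put `raw g x = √(2/k) (sin ⟪gᵢ, x⟫)ᵢ`, replaced by `0` when its norm exceeds `1`, and
take `w' = feature g w`. The Gaussian characteristic function gives
`E[sin ⟪g, w⟫ sin ⟪g, x⟫] = exp (-(‖w‖² + ‖x‖²)/2) sinh ⟪w, x⟫`. In the unit ball this has two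
consequences: the expected squared norm of `raw g x` is at most `1 - exp (-2) < 1`, and if
`⟪w, x⟫ ≥ γ`, the expected inner product of `raw g w` and `raw g x` is at least `2γ/e > γ/2`. All
the summands are bounded, so Hoeffding's inequality shows that for a fixed `x` the margin `γ/2`
fails with probability at most `3 exp (-kγ²/800) ≤ δ²`. Fubini and Markov's inequality turn this
pointwise bound into the claim.

The labelling `f` may be non-measurable. It agrees with the measurable sign of `⟪w, x⟫` on a set of
outer measure one, and subadditivity of the outer measure transfers the estimate back to `f`.
-/

namespace SineFeatures

open ProbabilityTheory

variable {d k : ℕ}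

/-- The Euclidean space `ℝ^d`. -/
abbrev Euc (d : ℕ) : Type := EuclideanSpace ℝ (Fin d)

lemma integrable_of_bounded {α : Type*} [MeasurableSpace α] {ν : Measure α} [IsFiniteMeasure ν]
    {h : α → ℝ} (hm : Measurable h) (C : ℝ) (hb : ∀ a, |h a| ≤ C) : Integrable h ν :=
  Integrable.of_bound hm.aestronglyMeasurable C (ae_of_all _ hb)

/-- The real part of the Gaussian characteristic function. -/
lemma integral_cos (x : Euc d) :
    ∫ g, Real.cos ⟪g, x⟫ ∂(stdGaussian (Euc d)) = Real.exp (-‖x‖ ^ 2 / 2) := by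
  have h := charFun_stdGaussian x
  rw [charFun_apply] at h
  have h2 := congrArg Complex.re h
  have hi : Integrable (fun g : Euc d => Complex.exp (⟪g, x⟫ * Complex.I)) (stdGaussian (Euc d)) := by
    refine Integrable.of_bound (Measurable.aestronglyMeasurable (by fun_prop)) 1 (ae_of_all _ ?_)
    intro g
    rw [Complex.norm_exp_ofReal_mul_I]
  have h3 := integral_re (𝕜 := ℂ) hi
  simp only [RCLike.re_eq_complex_re] at h3
  rw [← h3] at h2
  simp only [Complex.exp_ofReal_mul_I_re] at h2
  rw [h2]
  rw [← Complex.ofReal_re (Real.exp _)]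
  congr 1
  push_cast
  rfl

lemma integral_sin_mul_sin (w x : Euc d) :
    ∫ g, Real.sin ⟪g, w⟫ * Real.sin ⟪g, x⟫ ∂(stdGaussian (Euc d)) =
      Real.exp (-(‖w‖ ^ 2 + ‖x‖ ^ 2) / 2) * Real.sinh ⟪w, x⟫ := by
  have hi (y : Euc d) : Integrable (fun g : Euc d => Real.cos ⟪g, y⟫) (stdGaussian (Euc d)) :=
    integrable_of_bounded (by fun_prop) 1 fun g => Real.abs_cos_le_one _
  have h : ∀ g : Euc d, Real.sin ⟪g, w⟫ * Real.sin ⟪g, x⟫ =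
      (Real.cos ⟪g, w - x⟫ - Real.cos ⟪g, w + x⟫) / 2 := by
    intro g
    rw [inner_sub_right, inner_add_right, Real.cos_sub, Real.cos_add]
    ring
  simp_rw [h]
  rw [integral_div, integral_sub (hi _) (hi _), integral_cos, integral_cos, Real.sinh_eq,
    @norm_sub_sq_real, @norm_add_sq_real, mul_div_assoc', mul_sub, ← Real.exp_add, ← Real.exp_add]
  congr 3 <;> ring_nf

/-- Hoeffding's upper tail bound for independent copies of a function with values in `[-1, 1]`. -/
lemma hoeffding {ν : Measure (Euc d)} [IsProbabilityMeasure ν] {h : (Euc d) → ℝ}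
    (hm : Measurable h) (hb : ∀ g, |h g| ≤ 1) {m ε : ℝ} (hmean : ∫ g, h g ∂ν ≤ m) (hε : 0 ≤ ε)
    (hk : 0 < k) :
    (Measure.pi fun _ : Fin k => ν).real {g | k * (m + ε) ≤ ∑ i, h (g i)} ≤
      Real.exp (-(k * ε ^ 2 / 2)) := by
  set P := Measure.pi fun _ : Fin k => ν
  have hind : iIndepFun (fun (i : Fin k) (g : Fin k → Euc d) => h (g i) - ∫ a, h a ∂ν) P :=
    iIndepFun_pi (X := fun (_ : Fin k) a => h a - ∫ a, h a ∂ν)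
      fun i => (hm.sub_const _).aemeasurable
  have hsub : ∀ i ∈ (Finset.univ : Finset (Fin k)),
      HasSubgaussianMGF (fun g : Fin k → Euc d => h (g i) - ∫ a, h a ∂ν) 1 P := by
    intro i _
    have := hasSubgaussianMGF_of_mem_Icc (μ := P) (X := fun g => h (g i)) (a := -1) (b := 1)
      (hm.comp (measurable_pi_apply i)).aemeasurable
      (ae_of_all _ fun g => abs_le.1 (hb (g i)))
    have e : ∫ g, h (g i) ∂P = ∫ a, h a ∂ν :=
      integral_comp_eval (μ := fun _ : Fin k => ν) hm.aestronglyMeasurable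
    rw [e] at this
    convert this using 1
    ext
    norm_num
  have hk' : (0 : ℝ) < k := by exact_mod_cast hk
  have key := HasSubgaussianMGF.measure_sum_ge_le_of_iIndepFun hind hsub
    (ε := k * ε) (by positivity)
  refine (measureReal_mono ?_).trans (key.trans (le_of_eq ?_))
  · intro g hg
    simp only [Set.mem_ofPred_eq, Finset.sum_sub_distrib, Finset.sum_const, Finset.card_univ,
      Fintype.card_fin, nsmul_eq_mul] at hg ⊢
    nlinarith
  · simp
    field_simp

/-- The sine feature vector of `x` given by the directions `g`, scaled so that its expected squared
norm under Gaussian directions is `1 - exp (-2‖x‖²)`. -/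
noncomputable def raw (g : Fin k → Euc d) (x : Euc d) : Euc k :=
  WithLp.toLp 2 fun i => √(2 / k) * Real.sin ⟪g i, x⟫

/-- The sine feature vector, replaced by `0` when it leaves the unit ball. -/
noncomputable def feature (g : Fin k → Euc d) (x : Euc d) : Euc k :=
  if ‖raw g x‖ ≤ 1 then raw g x else 0

lemma inner_raw (g : Fin k → Euc d) (w x : Euc d) :
    ⟪raw g w, raw g x⟫ = 2 / k * ∑ i, Real.sin ⟪g i, w⟫ * Real.sin ⟪g i, x⟫ := by
  have : √(2 / (k : ℝ)) * √(2 / (k : ℝ)) = 2 / k := Real.mul_self_sqrt (by positivity)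
  rw [← this]
  simp only [raw, PiLp.inner_apply, Finset.mul_sum]
  refine Finset.sum_congr rfl fun i _ => ?_
  simp
  ring

lemma norm_feature_le (g : Fin k → Euc d) (x : Euc d) : ‖feature g x‖ ≤ 1 := by
  unfold feature
  split_ifs with h
  · exact h
  · simp

lemma feature_neg (g : Fin k → Euc d) (x : Euc d) : feature g (-x) = -feature g x := by
  have h : raw g (-x) = -raw g x := by
    ext i
    simp [raw]
  unfold feature
  rw [h, norm_neg]
  split_ifs <;> simp

lemma measurable_feature {α : Type*} [MeasurableSpace α] {G : α → Fin k → Euc d} {X : α → Euc d}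
    (hG : Measurable G) (hX : Measurable X) : Measurable fun a => feature (G a) (X a) := by
  have h : Measurable fun a => raw (G a) (X a) := by
    unfold raw
    refine (WithLp.measurable_toLp 2 _).comp (measurable_pi_lambda _ fun i => ?_)
    fun_prop
  unfold feature
  exact Measurable.ite (measurableSet_le h.norm measurable_const) h measurable_const

/-- The squared norm is `2/k` times a sum of terms with mean at most `9/20`, so exceeding `1` is a
deviation of at least `1/20 ≥ γ/20` per term. -/
lemma prob_norm_raw_gt {x : Euc d} (hx : ‖x‖ ≤ 1) {γ : ℝ} (hγ : γ ∈ Set.Ioo (0 : ℝ) 1)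
    (hk : 0 < k) :
    (Measure.pi fun _ : Fin k => stdGaussian (Euc d)).real {g | 1 < ‖raw g x‖} ≤
      Real.exp (-(k * γ ^ 2 / 800)) := by
  obtain ⟨h0, h1⟩ := hγ
  have hk' : (0 : ℝ) < k := by exact_mod_cast hk
  have hmean : ∫ g, Real.sin ⟪g, x⟫ * Real.sin ⟪g, x⟫ ∂(stdGaussian (Euc d)) ≤ 9 / 20 := by
    rw [integral_sin_mul_sin, real_inner_self_eq_norm_sq, Real.sinh_eq, mul_div_assoc', mul_sub,
      ← Real.exp_add, ← Real.exp_add]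
    have e1 : -(‖x‖ ^ 2 + ‖x‖ ^ 2) / 2 + ‖x‖ ^ 2 = 0 := by ring
    rw [e1, Real.exp_zero]
    have h2 : Real.exp (-2) ≤ Real.exp (-(‖x‖ ^ 2 + ‖x‖ ^ 2) / 2 + -‖x‖ ^ 2) := by
      apply Real.exp_le_exp.2
      nlinarith [norm_nonneg x]
    have h3 : (1 : ℝ) / 10 ≤ Real.exp (-2) := by
      have := Real.exp_one_lt_d9
      have e : Real.exp 2 = Real.exp 1 * Real.exp 1 := by rw [← Real.exp_add]; norm_num
      rw [Real.exp_neg, one_div]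
      apply inv_anti₀ (Real.exp_pos _)
      rw [e]
      nlinarith [Real.exp_pos 1]
    linarith
  have key := hoeffding (k := k) (ε := γ / 20) (by fun_prop)
    (fun g => by
      rw [abs_mul]
      exact mul_le_one₀ (Real.abs_sin_le_one _) (abs_nonneg _) (Real.abs_sin_le_one _))
    hmean (by positivity) hk
  refine (measureReal_mono ?_).trans (key.trans (le_of_eq ?_))
  · intro g hg
    simp only [Set.mem_ofPred_eq] at hg ⊢
    have h2 : 1 < ‖raw g x‖ ^ 2 := by nlinarith
    rw [← real_inner_self_eq_norm_sq, inner_raw, div_mul_eq_mul_div, lt_div_iff₀ hk'] at h2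
    nlinarith
  · ring_nf

/-- The inner product is `2/k` times a sum of terms with mean at least `3γ/10`, so falling below
`γ/2` is a deviation of at least `γ/20` per term. -/
lemma prob_inner_raw_lt {w x : Euc d} (hw : ‖w‖ ≤ 1) (hx : ‖x‖ ≤ 1) {γ : ℝ}
    (hγ : γ ∈ Set.Ioo (0 : ℝ) 1) (hwx : γ ≤ ⟪w, x⟫) (hk : 0 < k) :
    (Measure.pi fun _ : Fin k => stdGaussian (Euc d)).real {g | ⟪raw g w, raw g x⟫ < γ / 2} ≤
      Real.exp (-(k * γ ^ 2 / 800)) := by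
  obtain ⟨h0, h1⟩ := hγ
  have hk' : (0 : ℝ) < k := by exact_mod_cast hk
  have hmean : ∫ g, -(Real.sin ⟪g, w⟫ * Real.sin ⟪g, x⟫) ∂(stdGaussian (Euc d)) ≤
      -(3 / 10 * γ) := by
    rw [integral_neg, integral_sin_mul_sin]
    have h2 : Real.exp (-1) ≤ Real.exp (-(‖w‖ ^ 2 + ‖x‖ ^ 2) / 2) := by
      apply Real.exp_le_exp.2
      nlinarith [norm_nonneg x, norm_nonneg w]
    have h3 : (3 : ℝ) / 10 ≤ Real.exp (-1) := by
      have := Real.exp_neg_one_gt_d9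
      linarith
    have h4 : γ ≤ Real.sinh ⟪w, x⟫ :=
      hwx.trans (Real.self_le_sinh_iff.2 (h0.le.trans hwx))
    have := mul_le_mul (h3.trans h2) h4 h0.le (Real.exp_pos _).le
    linarith
  have key := hoeffding (k := k) (ε := γ / 20) (by fun_prop)
    (fun g => by
      rw [abs_neg, abs_mul]
      exact mul_le_one₀ (Real.abs_sin_le_one _) (abs_nonneg _) (Real.abs_sin_le_one _))
    hmean (by positivity) hk
  refine (measureReal_mono ?_).trans (key.trans (le_of_eq ?_))
  · intro g hg
    simp only [Set.mem_ofPred_eq, Finset.sum_neg_distrib] at hg ⊢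
    rw [inner_raw, div_mul_eq_mul_div, div_lt_iff₀ hk'] at hg
    nlinarith
  · ring_nf

lemma prob_inner_feature_lt {w x : Euc d} (hw : ‖w‖ ≤ 1) (hx : ‖x‖ ≤ 1) {γ : ℝ}
    (hγ : γ ∈ Set.Ioo (0 : ℝ) 1) (hwx : γ ≤ ⟪w, x⟫) (hk : 0 < k) :
    (Measure.pi fun _ : Fin k => stdGaussian (Euc d)).real
        {g | ⟪feature g w, feature g x⟫ < γ / 2} ≤
      3 * Real.exp (-(k * γ ^ 2 / 800)) := by
  have hsub : {g : Fin k → Euc d | ⟪feature g w, feature g x⟫ < γ / 2} ⊆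
      ({g | 1 < ‖raw g w‖} ∪ {g | 1 < ‖raw g x‖}) ∪ {g | ⟪raw g w, raw g x⟫ < γ / 2} := by
    intro g hg
    by_cases h1 : ‖raw g w‖ ≤ 1
    · by_cases h2 : ‖raw g x‖ ≤ 1
      · right
        simpa [feature, h1, h2] using hg
      · left; right; exact not_le.1 h2
    · left; left; exact not_le.1 h1
  refine (measureReal_mono hsub).trans ((measureReal_union_le _ _).trans ?_)
  have := measureReal_union_le (μ := Measure.pi fun _ : Fin k => stdGaussian (Euc d))
    {g : Fin k → Euc d | 1 < ‖raw g w‖} {g | 1 < ‖raw g x‖}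
  linarith [prob_norm_raw_gt hw hγ hk, prob_norm_raw_gt hx hγ hk,
    prob_inner_raw_lt hw hx hγ hwx hk]


lemma tail_le {γ δ : ℝ} (hγ : 0 < γ) (hδ : 0 < δ) (hδ2 : δ < 1 / 2)
    (hk : 3200 * Real.log (1 / δ) / γ ^ 2 ≤ k) :
    3 * Real.exp (-(k * γ ^ 2 / 800)) ≤ δ ^ 2 := by
  have h1 : Real.exp (-(k * γ ^ 2 / 800)) ≤ δ ^ 4 := by
    rw [div_le_iff₀ (by positivity), one_div, Real.log_inv] at hk
    calc Real.exp (-(k * γ ^ 2 / 800)) ≤ Real.exp (4 * Real.log δ) :=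
          Real.exp_le_exp.2 (by linarith)
      _ = δ ^ 4 := by
          rw [show 4 * Real.log δ = ((4 : ℕ) : ℝ) * Real.log δ by norm_num, Real.exp_nat_mul,
            Real.exp_log hδ]
  have h2 : δ ^ 2 ≤ 1 / 4 := by nlinarith
  nlinarith [sq_nonneg δ]

/-- Neither `A` nor `s` needs to be measurable. -/
lemma one_sub_le_of_compl_le {α : Type*} [MeasurableSpace α] {μ : Measure α}
    {s : Set α} {δ : ℝ} (h0 : 0 ≤ δ) {A : Set α} (hA : μ A = 1)
    (h : μ (A \ s) ≤ ENNReal.ofReal δ) :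
    ENNReal.ofReal (1 - δ) ≤ μ (A ∩ s) := by
  rw [ENNReal.ofReal_sub _ h0, ENNReal.ofReal_one, tsub_le_iff_right, ← hA]
  calc μ A ≤ μ (A ∩ s) + μ (A \ s) := measure_le_inter_add_sdiff _ _ _
    _ ≤ _ := by gcongr

/-- If `δ ≥ 1/2`, a constant unit feature classifies a `1 - δ` fraction with margin `γ/2`. -/
lemma constant_case (hk : 0 < k) {δ : ℝ} (hδ : 1 / 2 ≤ δ)
    (D : Measure (Euc d)) [IsProbabilityMeasure D] {γ : ℝ} (hγ : γ < 1)
    (f : Euc d → ℝ) (hf : ∀ x, f x = 1 ∨ f x = -1) :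
    ∃ w' : Euc k, ‖w'‖ ≤ 1 ∧ 1 - δ ≤
      (D {x | γ / 2 ≤ f x * ⟪w', EuclideanSpace.single (⟨0, hk⟩ : Fin k) (1 : ℝ)⟫}).toReal := by
  have hsum : 1 ≤ D.real {x | f x = 1} + D.real {x | f x = -1} := by
    have hU : {x | f x = 1} ∪ {x | f x = -1} = Set.univ := Set.eq_univ_of_forall hf
    have := measureReal_union_le (μ := D) {x | f x = 1} {x | f x = -1}
    rwa [hU, probReal_univ] at this
  by_cases h : 1 / 2 ≤ D.real {x | f x = 1}
  · refine ⟨EuclideanSpace.single ⟨0, hk⟩ 1, by simp, ?_⟩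
    have : D.real {x | f x = 1} ≤ D.real {x | γ / 2 ≤ f x *
        ⟪(EuclideanSpace.single ⟨0, hk⟩ 1 : Euc k), EuclideanSpace.single ⟨0, hk⟩ (1 : ℝ)⟫} := by
      refine measureReal_mono fun x hx => ?_
      simp only [Set.mem_ofPred_eq] at hx
      simp [hx]
      linarith
    simp only [Measure.real] at *
    linarith
  · refine ⟨-EuclideanSpace.single ⟨0, hk⟩ 1, by simp, ?_⟩
    have : D.real {x | f x = -1} ≤ D.real {x | γ / 2 ≤ f x *
        ⟪-(EuclideanSpace.single ⟨0, hk⟩ 1 : Euc k), EuclideanSpace.single ⟨0, hk⟩ (1 : ℝ)⟫} := by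
      refine measureReal_mono fun x hx => ?_
      simp only [Set.mem_ofPred_eq] at hx
      simp [hx]
      linarith
    simp only [Measure.real] at *
    linarith

/-- If almost every point is bad with probability at most `δ²`, then with probability at least
`1 - δ` at most a `δ` fraction of the points is bad. -/
lemma markov_fubini {α β : Type*} [MeasurableSpace α] [MeasurableSpace β] {μ : Measure α}
    {D : Measure β} [IsProbabilityMeasure μ] [IsProbabilityMeasure D] {B : Set (α × β)}
    (hB : MeasurableSet B) {δ : ℝ} (hδ : 0 < δ)
    (h : ∀ᵐ x ∂D, μ {a | (a, x) ∈ B} ≤ ENNReal.ofReal (δ ^ 2)) :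
    ENNReal.ofReal (1 - δ) ≤ μ {a | D {x | (a, x) ∈ B} ≤ ENNReal.ofReal δ} := by
  have hint : ∫⁻ a, D {x | (a, x) ∈ B} ∂μ ≤ ENNReal.ofReal (δ ^ 2) := by
    have e1 : ∫⁻ a, D {x | (a, x) ∈ B} ∂μ = (μ.prod D) B := (Measure.prod_apply hB).symm
    rw [e1, Measure.prod_apply_symm hB]
    calc ∫⁻ x, μ {a | (a, x) ∈ B} ∂D ≤ ∫⁻ _, ENNReal.ofReal (δ ^ 2) ∂D := lintegral_mono_ae h
      _ = ENNReal.ofReal (δ ^ 2) := by simp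
  have hmk : μ {a | ENNReal.ofReal δ ≤ D {x | (a, x) ∈ B}} ≤ ENNReal.ofReal δ := by
    refine (meas_ge_le_lintegral_div (measurable_measure_prodMk_left hB).aemeasurable
      (by simpa using hδ) ENNReal.ofReal_ne_top).trans ?_
    refine ENNReal.div_le_of_le_mul (hint.trans (le_of_eq ?_))
    rw [← ENNReal.ofReal_mul hδ.le, sq]
  have := one_sub_le_of_compl_le (μ := μ) (A := Set.univ)
    (s := {a | D {x | (a, x) ∈ B} ≤ ENNReal.ofReal δ}) hδ.le measure_univ
    ((measure_mono fun a ha => ?_).trans hmk)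
  · simpa using this
  · simp only [Set.mem_sdiff, Set.mem_univ, true_and, Set.mem_ofPred_eq, not_le] at ha
    exact ha.le

/-- Sine features succeed as soon as the pointwise failure probability is at most `δ²`. -/
lemma feature_case (hk : 0 < k) {γ δ : ℝ} (hγ : γ ∈ Set.Ioo (0 : ℝ) 1) (hδ : 0 < δ)
    (htail : 3 * Real.exp (-(k * γ ^ 2 / 800)) ≤ δ ^ 2)
    (D : Measure (Euc d)) [IsProbabilityMeasure D] (hD : D {x | ‖x‖ ≤ 1} = 1)
    (f : Euc d → ℝ) (hf : ∀ x, f x = 1 ∨ f x = -1) (w : Euc d) (hw : ‖w‖ ≤ 1)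
    (hsep : D {x | γ ≤ f x * ⟪w, x⟫} = 1) :
    ENNReal.ofReal (1 - δ) ≤ (Measure.pi fun _ : Fin k => stdGaussian (Euc d))
      {g | ∃ w' : Euc k, ‖w'‖ ≤ 1 ∧
        1 - δ ≤ (D {x | γ / 2 ≤ f x * ⟪w', feature g x⟫}).toReal} := by
  -- A measurable substitute for `f`, equal to it wherever the margin condition holds.
  let s : Euc d → ℝ := fun x => if 0 ≤ ⟪w, x⟫ then 1 else -1
  have hs : Measurable s :=
    Measurable.ite (measurableSet_le measurable_const (by fun_prop)) measurable_const
      measurable_const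
  have hfs : ∀ x, γ ≤ f x * ⟪w, x⟫ → s x = f x := by
    intro x hx
    have h0 := hγ.1
    rcases hf x with h | h <;> rw [h] at hx ⊢ <;> simp only [s]
    · rw [if_pos (by linarith)]
    · rw [if_neg (by linarith)]
  let B : Set ((Fin k → Euc d) × Euc d) :=
    {p | s p.2 * ⟪feature p.1 w, feature p.1 p.2⟫ < γ / 2}
  have hB : MeasurableSet B := by
    have h1 : Measurable fun p : (Fin k → Euc d) × Euc d => feature p.1 w :=
      measurable_feature measurable_fst measurable_const
    have h2 : Measurable fun p : (Fin k → Euc d) × Euc d => ⟪feature p.1 w, feature p.1 p.2⟫ :=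
      h1.inner (measurable_feature measurable_fst measurable_snd)
    have h3 : Measurable fun p : (Fin k → Euc d) × Euc d => s p.2 := hs.comp measurable_snd
    exact measurableSet_lt (h3.mul h2) measurable_const
  have hball : ∀ᵐ x ∂D, ‖x‖ ≤ 1 :=
    (mem_ae_iff_prob_eq_one (measurableSet_le measurable_norm measurable_const)).2 hD
  have hmargin : ∀ᵐ x ∂D, γ ≤ s x * ⟪w, x⟫ := by
    refine (mem_ae_iff_prob_eq_one (measurableSet_le measurable_const
      (hs.mul (by fun_prop)))).2 (le_antisymm prob_le_one ?_)
    rw [← hsep]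
    refine measure_mono fun x hx => ?_
    change γ ≤ s x * ⟪w, x⟫
    rwa [hfs x hx]
  have hpt : ∀ᵐ x ∂D, (Measure.pi fun _ : Fin k => stdGaussian (Euc d)) {g | (g, x) ∈ B} ≤
      ENNReal.ofReal (δ ^ 2) := by
    filter_upwards [hball, hmargin] with x hx hm
    rw [← ofReal_measureReal]
    refine ENNReal.ofReal_le_ofReal (le_trans ?_ htail)
    have hs' : s x = 1 ∨ s x = -1 := by
      simp only [s]
      split_ifs <;> simp
    rcases hs' with h | h
    · rw [h, one_mul] at hm
      simpa [B, h] using prob_inner_feature_lt hw hx hγ hm hk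
    · have hm' : γ ≤ ⟪w, -x⟫ := by
        rw [h] at hm
        rw [inner_neg_right]
        linarith
      simpa [B, h, feature_neg] using
        prob_inner_feature_lt hw (x := -x) (by rwa [norm_neg]) hγ hm' hk
  refine (markov_fubini hB hδ hpt).trans (measure_mono fun g hg => ?_)
  refine ⟨feature g w, norm_feature_le g w, ?_⟩
  -- The set where `f` has margin `γ` has outer measure one, so removing the bad points leaves at
  -- least `1 - δ`.
  have h1 := one_sub_le_of_compl_le (s := {x | (g, x) ∈ B}ᶜ) hδ.le hsep
    ((measure_mono (by rw [Set.sdiff_compl]; exact Set.inter_subset_right)).trans hg)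
  have h2 := (ENNReal.ofReal_le_iff_le_toReal (measure_ne_top _ _)).1 h1
  refine h2.trans (measureReal_mono fun x hx => ?_)
  obtain ⟨hx1, hx2⟩ := hx
  have hx3 : ¬ s x * ⟪feature g w, feature g x⟫ < γ / 2 := hx2
  rw [hfs x hx1] at hx3
  exact not_lt.1 hx3

end SineFeatures

theorem stmt13 :
    ∃ c : ℝ, 0 < c ∧
      ∀ (d : ℕ), 1 ≤ d → ∀ (γ δ : ℝ), γ ∈ Set.Ioo (0 : ℝ) 1 → δ ∈ Set.Ioo (0 : ℝ) 1 →
        ∀ d' : ℕ, d' = ⌈c * Real.log (1 / δ) / γ ^ 2⌉₊ →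
          ∃ (Ω : Type) (_ : MeasurableSpace Ω) (μ : Measure Ω)
            (ψ : Ω → EuclideanSpace ℝ (Fin d) → EuclideanSpace ℝ (Fin d')),
            IsProbabilityMeasure μ ∧
            (∀ ω, Measurable (ψ ω)) ∧
            (∀ ω x, ‖x‖ ≤ 1 → ‖ψ ω x‖ ≤ 1) ∧
            ∀ (D : Measure (EuclideanSpace ℝ (Fin d))), IsProbabilityMeasure D →
              D {x | ‖x‖ ≤ 1} = 1 →
              ∀ f : EuclideanSpace ℝ (Fin d) → ℝ, (∀ x, f x = 1 ∨ f x = -1) →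
              ∀ w : EuclideanSpace ℝ (Fin d), ‖w‖ ≤ 1 →
                D {x | γ ≤ f x * ⟪w, x⟫} = 1 →
                ENNReal.ofReal (1 - δ) ≤
                  μ {ω | ∃ w' : EuclideanSpace ℝ (Fin d'), ‖w'‖ ≤ 1 ∧
                    1 - δ ≤ (D {x | γ / 2 ≤ f x * ⟪w', ψ ω x⟫}).toReal} := by
  refine ⟨3200, by norm_num, ?_⟩
  intro d _ γ δ hγ hδ k hk
  have hlog : 0 < Real.log (1 / δ) := Real.log_pos (by rw [lt_div_iff₀ hδ.1]; linarith [hδ.2])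
  have hk0 : 0 < k := by
    have := hγ.1
    rw [hk]
    exact Nat.ceil_pos.2 (by positivity)
  rcases le_or_gt (1 / 2) δ with h | h
  · refine ⟨Unit, inferInstance, Measure.dirac (),
      fun _ _ => EuclideanSpace.single (⟨0, hk0⟩ : Fin k) (1 : ℝ),
      inferInstance, fun _ => measurable_const, by simp, ?_⟩
    intro D hD _ f hf w _ _
    have hc := SineFeatures.constant_case hk0 h D hγ.2 f hf
    simp only [hc]
    simpa using hδ.1.le
  · refine ⟨Fin k → EuclideanSpace ℝ (Fin d), inferInstance,
      Measure.pi fun _ => ProbabilityTheory.stdGaussian _, SineFeatures.feature, inferInstance,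
      fun g => SineFeatures.measurable_feature measurable_const measurable_id,
      fun g x _ => SineFeatures.norm_feature_le g x, ?_⟩
    intro D hD hball f hf w hw hsep
    exact SineFeatures.feature_case hk0 hγ hδ.1
      (SineFeatures.tail_le hγ.1 hδ.1 h (hk ▸ Nat.le_ceil _)) D hball f hf w hw hsep
end
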